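/- Let D be a face-convex good drawing of K_n in the sphere with outer face F, and let J be a K_4 subgraph of K_n whose drawing D[J] has a crossing, with the four vertices labelled v, w, x, y so that the edge-arcs D[vw] and D[xy] cross. Then F is contained in the face of D[J] bounded by the 4-cycle (v, x, w, y, v). -/

import Mathlib

open Set Topology

noncomputable section

abbrev Plane : Type := EuclideanSpace ℝ (Fin 2)

abbrev SpherePt : Type := ↥(Metric.sphere (0 : EuclideanSpace ℝ (Fin 3)) 1)

/-- `γ` crosses the curve `σ` at `p`: `p` lies on both sets, and in every neighbourhood of `p`
there is a smaller neighbourhood `V` such that `V \ σ` splits into two connected "sides",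
both of which meet `γ`. -/
def CrossesAt {X : Type*} [TopologicalSpace X] (σ γ : Set X) (p : X) : Prop :=
  p ∈ σ ∧ p ∈ γ ∧ ∀ U ∈ nhds p, ∃ V ∈ nhds p, V ⊆ U ∧
    ∃ C₁ C₂ : Set X, V \ σ = C₁ ∪ C₂ ∧ Disjoint C₁ C₂ ∧
      IsPreconnected C₁ ∧ IsPreconnected C₂ ∧ (γ ∩ C₁).Nonempty ∧ (γ ∩ C₂).Nonempty

/-- `Δ` is one of the closed regions ("closed discs") bounded by the curve `C`:
it is the union of `C` with a connected component of the complement of `C`. -/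
def IsClosedSide {X : Type*} [TopologicalSpace X] (C Δ : Set X) : Prop :=
  ∃ q, q ∉ C ∧ Δ = connectedComponentIn Cᶜ q ∪ C

/-- `Δ` is one of the open regions ("open discs") bounded by the curve `C`. -/
def IsOpenSide {X : Type*} [TopologicalSpace X] (C Δ : Set X) : Prop :=
  ∃ q, q ∉ C ∧ Δ = connectedComponentIn Cᶜ q

/-- `G` is a face (a connected component of the complement) of the point set `A`. -/
def IsFaceOf {X : Type*} [TopologicalSpace X] (A G : Set X) : Prop :=
  ∃ q, q ∉ A ∧ G = connectedComponentIn Aᶜ q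

/-- A good drawing of the complete graph `K_n` in the space `X`. -/
structure GoodDrawing (n : ℕ) (X : Type*) [TopologicalSpace X] where
  vtx : Fin n → X
  arc : Fin n → Fin n → Set X
  vtx_inj : Function.Injective vtx
  arc_symm : ∀ u v, arc u v = arc v u
  isArc : ∀ u v, u ≠ v → ∃ f : ℝ → X, ContinuousOn f (Set.Icc 0 1) ∧
    Set.InjOn f (Set.Icc 0 1) ∧ f 0 = vtx u ∧ f 1 = vtx v ∧ arc u v = f '' Set.Icc 0 1
  vtx_not_mem : ∀ u v w, u ≠ v → w ≠ u → w ≠ v → vtx w ∉ arc u v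
  adj_arcs : ∀ u v w, u ≠ v → u ≠ w → v ≠ w → arc u v ∩ arc u w = {vtx u}
  indep_arcs : ∀ u v x y : Fin n, u ≠ v → x ≠ y → u ≠ x → u ≠ y → v ≠ x → v ≠ y →
    (arc u v ∩ arc x y).Subsingleton ∧
      ∀ p ∈ arc u v ∩ arc x y,
        CrossesAt (arc u v) (arc x y) p ∧ CrossesAt (arc x y) (arc u v) p
  no_triple_pt : ∀ p : X, p ∉ Set.range vtx → ∀ u v x y s t : Fin n,
    u ≠ v → x ≠ y → s ≠ t →
    ({u, v} : Finset (Fin n)) ≠ {x, y} → ({u, v} : Finset (Fin n)) ≠ {s, t} →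
    ({x, y} : Finset (Fin n)) ≠ {s, t} →
    ¬(p ∈ arc u v ∧ p ∈ arc x y ∧ p ∈ arc s t)

namespace GoodDrawing

variable {n : ℕ} {X : Type*} [TopologicalSpace X]

/-- The point set of the subdrawing induced by the set `W` of vertices. -/
def image (D : GoodDrawing n X) (W : Set (Fin n)) : Set X :=
  (D.vtx '' W) ∪ ⋃ u ∈ W, ⋃ v ∈ W, ⋃ (_ : u ≠ v), D.arc u v

/-- The simple closed curve that is the drawing of the 3-cycle on `a`, `b`, `c`. -/
def tri (D : GoodDrawing n X) (a b c : Fin n) : Set X :=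
  D.arc a b ∪ D.arc b c ∪ D.arc a c

/-- `Δ` is convex: it contains the arc between any two vertex points it contains. -/
def ConvexDisc (D : GoodDrawing n X) (Δ : Set X) : Prop :=
  ∀ x y : Fin n, x ≠ y → D.vtx x ∈ Δ → D.vtx y ∈ Δ → D.arc x y ⊆ Δ

/-- `F` is a face of the drawing `D`. -/
def IsFace (D : GoodDrawing n X) (F : Set X) : Prop :=
  IsFaceOf (D.image Set.univ) F

/-- `D` is face-convex with outer face `F`. -/
def FaceConvex (D : GoodDrawing n X) (F : Set X) : Prop :=
  D.IsFace F ∧ ∀ a b c : Fin n, a ≠ b → a ≠ c → b ≠ c →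
    ∀ Δ : Set X, IsClosedSide (D.tri a b c) Δ → ¬F ⊆ Δ → D.ConvexDisc Δ

/-- `D` is a convex drawing: every 3-cycle has at least one convex closed side. -/
def IsConvex (D : GoodDrawing n X) : Prop :=
  ∀ a b c : Fin n, a ≠ b → a ≠ c → b ≠ c →
    ∃ Δ : Set X, IsClosedSide (D.tri a b c) Δ ∧ D.ConvexDisc Δ

/-- The closed curve drawn by the cycle `c 0, c 1, …, c (m-1), c 0` of `K_n`. -/
def cycCurve (D : GoodDrawing n X) {m : ℕ} [NeZero m] (c : Fin m → Fin n) : Set X :=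
  ⋃ i : Fin m, D.arc (c i) (c (i + 1))

/-- `Δ` is the convex hull `Δ_W` of the vertex set `W` (relative to the outer face `F`):
the face of the subdrawing `D[W]` containing `F` is bounded by a cycle `C_W` on vertices
of `W`, and `Δ` is the closed disc bounded by `D[C_W]` disjoint from `F`. -/
def IsHull (D : GoodDrawing n X) (F : Set X) (W : Set (Fin n)) (Δ : Set X) : Prop :=
  ∃ (m : ℕ) (c : Fin (m + 3) → Fin n), Function.Injective c ∧ (∀ i, c i ∈ W) ∧
    (∃ G : Set X, IsFaceOf (D.image W) G ∧ F ⊆ G ∧ frontier G = D.cycCurve c) ∧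
    IsClosedSide (D.cycCurve c) Δ ∧ Disjoint F Δ

/-- The data of the two local sides `C 0`, `C 1` of the arc `D[uv]` at an interior
point `p` of the arc. -/
def LocalSides (D : GoodDrawing n X) (u v : Fin n) (p : X) (C : Fin 2 → Set X) : Prop :=
  p ∈ D.arc u v ∧ p ≠ D.vtx u ∧ p ≠ D.vtx v ∧
    ∃ V ∈ nhds p, C 0 ∪ C 1 = V \ D.arc u v ∧ Disjoint (C 0) (C 1) ∧
      IsPreconnected (C 0) ∧ IsPreconnected (C 1) ∧ (C 0).Nonempty ∧ (C 1).Nonempty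

/-- Relative to the outer face `F` and the local sides `C` of `D[uv]` at `p`, the
vertex `w` is on side `i` of `uv`: the closed disc bounded by `D[{u,v,w}]` not
containing `F` lies locally on side `i` of `D[uv]`. -/
def OnSide (D : GoodDrawing n X) (F : Set X) (u v : Fin n) (p : X) (C : Fin 2 → Set X)
    (i : Fin 2) (w : Fin n) : Prop :=
  w ≠ u ∧ w ≠ v ∧ ∃ Δ : Set X, IsClosedSide (D.tri u v w) Δ ∧ ¬F ⊆ Δ ∧
    ∃ V ∈ nhds p, C i ∩ V ⊆ Δ

/-- `Side(uv, i)`: the set consisting of `u`, `v` and all vertices on side `i` of `uv`. -/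
def SideSet (D : GoodDrawing n X) (F : Set X) (u v : Fin n) (p : X) (C : Fin 2 → Set X)
    (i : Fin 2) : Set (Fin n) :=
  {u, v} ∪ {w : Fin n | D.OnSide F u v p C i w}

/-- The edge-arcs `D[uv]` and `D[xy]` cross: they share a non-vertex point. -/
def Crosses (D : GoodDrawing n X) (u v x y : Fin n) : Prop :=
  ∃ p : X, p ∈ D.arc u v ∩ D.arc x y ∧ p ∉ Set.range D.vtx

/-- The set of empty triangles of `D`: pairs of a 3-set of vertices together with an
open disc bounded by the corresponding triangle containing no vertex point. -/
def emptyTriangles (D : GoodDrawing n X) : Set (Finset (Fin n) × Set X) :=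
  {T | ∃ a b c : Fin n, a ≠ b ∧ a ≠ c ∧ b ≠ c ∧ T.1 = {a, b, c} ∧
    IsOpenSide (D.tri a b c) T.2 ∧ ∀ i, D.vtx i ∉ T.2}

end GoodDrawing

/-- A pseudoline in the plane. -/
def IsPseudoline (σ : Set Plane) : Prop :=
  IsClosed σ ∧ Nonempty (↥σ ≃ₜ ℝ) ∧ ¬IsPreconnected σᶜ

/-- An arrangement of pseudolines: any two distinct members meet in exactly one
point, at which they cross. -/
def IsArrangement (A : Finset (Set Plane)) : Prop :=
  (∀ σ ∈ A, IsPseudoline σ) ∧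
    ∀ σ ∈ A, ∀ τ ∈ A, σ ≠ τ →
      ∃ p : Plane, σ ∩ τ = {p} ∧ CrossesAt σ τ p ∧ CrossesAt τ σ p

/-- A planar good drawing of `K_n` is pseudolinear if some arrangement of pseudolines
contains, for each edge, a distinct pseudoline containing that edge-arc. -/
def GoodDrawing.Pseudolinear {n : ℕ} (D : GoodDrawing n Plane) : Prop :=
  ∃ (A : Finset (Set Plane)) (L : Fin n → Fin n → Set Plane), IsArrangement A ∧
    (∀ u v, u ≠ v → L u v ∈ A ∧ D.arc u v ⊆ L u v) ∧
    (∀ u v, L u v = L v u) ∧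
    ∀ u v x y : Fin n, u ≠ v → x ≠ y →
      ({u, v} : Finset (Fin n)) ≠ {x, y} → L u v ≠ L x y

/-!
Let `D[vw]` and `D[xy]` cross in `p`, and let `b` be a point of `F`. The arc `D[xy]` crosses the
triangle `vwx` in `p`, so a point of it between `x` and `p` is not on the side of `y`. If `b` were
not on the side of `y` either, the closed side of `vwx` containing `y` would be convex, hence
would contain all of `D[xy]`. So `b` is on the side of `y` of the triangle `vwx` and,
symmetrically, on the side of `x` of the triangle `vwy`.

Now let `a` be a point of `D[xy]` between `p` and `y`. Then `vwx` does not separate `a` from `b`,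
but `vwy` does. The curve `Q` drawn by the 4-cycle `(v, x, w, y, v)` meets `vwx` in the connected
path `vxw`, so by Janiszewski's theorem, if `Q` did not separate `a` from `b`, neither would `Q ∪
vwx`, which contains `vwy`. Hence the component of the complement of `Q` containing `b` avoids
`a`, and with it both diagonals, which are joined to `a` through `p` off `Q`. So this component is
a face of `D[J]`, and its frontier is the Jordan curve `Q`.

The separation theorems come from Eilenberg's criterion: for a closed set `K` in a sphere `S` and
a homeomorphism `e` from `S \ {b}` to the complex plane, `a` and `b` lie in the same component of
the complement of `K` if and only if `z ↦ e z - e a` has a continuous logarithm on `K`.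
-/

/-! ### Continuous logarithms -/

/-- `HasLogOn f K`: the function `f` has a continuous logarithm on the set `K`. -/
def HasLogOn {X : Type*} [TopologicalSpace X] (f : X → ℂ) (K : Set X) : Prop :=
  ∃ g : X → ℂ, ContinuousOn g K ∧ EqOn (Complex.exp ∘ g) f K

namespace HasLogOn

variable {X Y : Type*} [TopologicalSpace X] [TopologicalSpace Y] {f h : X → ℂ} {K A B : Set X}

theorem mono (hf : HasLogOn f B) (hAB : A ⊆ B) : HasLogOn f A :=
  let ⟨g, hg, hgf⟩ := hf
  ⟨g, hg.mono hAB, hgf.mono hAB⟩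

theorem congr (hf : HasLogOn f K) (hfh : EqOn f h K) : HasLogOn h K :=
  let ⟨g, hg, hgf⟩ := hf
  ⟨g, hg, hgf.trans hfh⟩

theorem mul (hf : HasLogOn f K) (hh : HasLogOn h K) : HasLogOn (f * h) K := by
  obtain ⟨g, hg, hgf⟩ := hf
  obtain ⟨k, hk, hkh⟩ := hh
  refine ⟨g + k, hg.add hk, fun z hz ↦ ?_⟩
  simp only [Function.comp_apply, Pi.add_apply, Pi.mul_apply, Complex.exp_add, ← hgf hz, ← hkh hz]

theorem comp {φ : Y → X} {L : Set Y} (hf : HasLogOn f K) (hφ : ContinuousOn φ L)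
    (hφK : MapsTo φ L K) : HasLogOn (f ∘ φ) L :=
  let ⟨g, hg, hgf⟩ := hf
  ⟨g ∘ φ, hg.comp hφ hφK, fun _ hz ↦ hgf (hφK hz)⟩

theorem of_mem_slitPlane (hf : ContinuousOn f K) (hfK : MapsTo f K Complex.slitPlane) :
    HasLogOn f K :=
  ⟨fun z ↦ Complex.log (f z), hf.clog hfK,
    fun _ hz ↦ Complex.exp_log (Complex.slitPlane_ne_zero (hfK hz))⟩

theorem of_simplyConnected [SimplyConnectedSpace X] [LocallyPathConnectedSpace X]
    (hf : Continuous f) (hf₀ : ∀ z, f z ≠ 0) : HasLogOn f univ :=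
  Complex.exists_continuousOn_eqOn_exp_comp
    ((Homeomorph.Set.univ X).toHomotopyEquiv.simplyConnectedSpace_iff.2 ‹_›)
    isOpen_univ hf.continuousOn
    (by simpa using hf₀)

/-- If `‖f - h‖ < ‖h‖` then `f / h` stays in the slit plane. -/
theorem of_norm_sub_lt (hh : HasLogOn h K) (hf : ContinuousOn f K) (hhc : ContinuousOn h K)
    (hfh : ∀ z ∈ K, ‖f z - h z‖ < ‖h z‖) : HasLogOn f K := by
  have hh₀ (z) (hz : z ∈ K) : h z ≠ 0 := norm_pos_iff.1 ((norm_nonneg _).trans_lt (hfh z hz))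
  have hquot : HasLogOn (f / h) K := by
    refine of_mem_slitPlane (hf.div hhc hh₀) fun z hz ↦ ?_
    have hdecomp : (f / h) z = 1 + (f z - h z) / h z := by
      simp only [Pi.div_apply]; field_simp [hh₀ z hz]; ring
    rw [hdecomp]
    refine Complex.mem_slitPlane_of_norm_lt_one ?_
    rw [norm_div, div_lt_one (norm_pos_iff.2 (hh₀ z hz))]
    exact hfh z hz
  exact (hquot.mul hh).congr fun z hz ↦ div_mul_cancel₀ _ (hh₀ z hz)

end HasLogOn

section Winding

variable {X : Type*} [TopologicalSpace X] {K : Set X}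

theorem exists_int_of_exp_eq {g h : X → ℂ} (hK : IsPreconnected K) (hg : ContinuousOn g K)
    (hh : ContinuousOn h K) (hgh : ∀ z ∈ K, Complex.exp (g z) = Complex.exp (h z)) :
    ∃ n : ℤ, ∀ z ∈ K, g z = h z + n * (2 * Real.pi * Complex.I) := by
  choose! n hn using fun z hz ↦ Complex.exp_eq_exp_iff_exists_int.1 (hgh z hz)
  have hnc : ContinuousOn n K := by
    refine Int.isClosedEmbedding_coe_real.isInducing.continuousOn_iff.2 ?_
    have hquot : ContinuousOn (fun z ↦ ((g z - h z) / (2 * Real.pi * Complex.I)).re) K :=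
      Complex.continuous_re.comp_continuousOn ((hg.sub hh).div_const _)
    exact hquot.congr fun z hz ↦ by simp [hn z hz, Real.pi_ne_zero]
  obtain rfl | ⟨w, hw⟩ := K.eq_empty_or_nonempty
  · exact ⟨0, by simp⟩
  · exact ⟨n w, fun z hz ↦ by rw [hn z hz, hK.constant hnc hz hw]⟩

/-- On the connected intersection the two logarithms differ by a constant multiple of `2πi`. -/
theorem HasLogOn.union {f : X → ℂ} {A B : Set X} (hA : IsClosed A) (hB : IsClosed B)
    (hAB : IsPreconnected (A ∩ B)) (hfA : HasLogOn f A) (hfB : HasLogOn f B) :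
    HasLogOn f (A ∪ B) := by
  classical
  obtain ⟨g, hg, hgf⟩ := hfA
  obtain ⟨h, hh, hhf⟩ := hfB
  obtain ⟨n, hn⟩ := exists_int_of_exp_eq hAB (hg.mono inter_subset_left)
    (hh.mono inter_subset_right) fun z hz ↦ (hgf hz.1).trans (hhf hz.2).symm
  set h' : X → ℂ := fun z ↦ h z + n * (2 * Real.pi * Complex.I)
  have hh'f : EqOn (Complex.exp ∘ h') f B := fun z hz ↦ by
    simpa [h', Complex.exp_add, Complex.exp_int_mul_two_pi_mul_I] using hhf hz
  have hgA : EqOn (A.piecewise g h') g A := A.piecewise_eqOn g h'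
  have hhB : EqOn (A.piecewise g h') h' B := fun z hz ↦ by
    by_cases hzA : z ∈ A <;> simp [hzA, h', ← hn z, hz]
  refine ⟨A.piecewise g h', (hg.congr hgA).union_of_isClosed
    ((hh.add continuousOn_const).congr hhB) hA hB, ?_⟩
  rintro z (hz | hz)
  · simpa [hgA hz] using hgf hz
  · simpa [hhB hz] using hh'f hz

theorem not_hasLogOn_id_sphere {R : ℝ} (hR : 0 < R) : ¬HasLogOn id (Metric.sphere (0 : ℂ) R) := by
  rintro ⟨g, hg, hgid⟩
  let c : ℝ → ℂ := circleMap 0 R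
  have hc (t : ℝ) : c t ∈ Metric.sphere 0 R := circleMap_mem_sphere 0 hR.le t
  obtain ⟨n, hn⟩ := exists_int_of_exp_eq isPreconnected_univ
    (g := g ∘ c) (h := fun t : ℝ ↦ Complex.log R + t * Complex.I)
    (hg.comp (continuous_circleMap 0 R).continuousOn fun t _ ↦ hc t) (by fun_prop) fun t _ ↦ by
      have hR₀ : (R : ℂ) ≠ 0 := mod_cast hR.ne'
      simpa [c, circleMap, Complex.exp_add, Complex.exp_log hR₀] using hgid (hc t)
  have hperiod : c (2 * Real.pi) = c 0 := by simp [c, circleMap]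
  have h₀ := hn 0 trivial
  have h₁ := hn (2 * Real.pi) trivial
  simp only [Function.comp_apply, hperiod] at h₀ h₁
  simp [h₀, Real.pi_ne_zero] at h₁

end Winding

/-! ### Components of complements -/

section Components

variable {X : Type*} [TopologicalSpace X] {K L : Set X} {a b c : X}

/-- `JoinedOff K a b`: some connected set avoiding `K` contains both `a` and `b`, that is, `a` and
`b` lie in the same component of the complement of `K`. -/
def JoinedOff (K : Set X) (a b : X) : Prop :=
  ∃ Y ⊆ Kᶜ, IsPreconnected Y ∧ a ∈ Y ∧ b ∈ Y

namespace JoinedOff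

theorem refl (ha : a ∉ K) : JoinedOff K a a :=
  ⟨{a}, by simpa, isPreconnected_singleton, rfl, rfl⟩

theorem symm (h : JoinedOff K a b) : JoinedOff K b a :=
  let ⟨Y, hYK, hY, ha, hb⟩ := h
  ⟨Y, hYK, hY, hb, ha⟩

theorem trans (hab : JoinedOff K a b) (hbc : JoinedOff K b c) : JoinedOff K a c := by
  obtain ⟨Y, hYK, hY, haY, hbY⟩ := hab
  obtain ⟨Z, hZK, hZ, hbZ, hcZ⟩ := hbc
  exact ⟨Y ∪ Z, union_subset hYK hZK, hY.union b hbY hbZ hZ, .inl haY, .inr hcZ⟩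

theorem mono (hKL : K ⊆ L) (h : JoinedOff L a b) : JoinedOff K a b :=
  let ⟨Y, hYL, hY⟩ := h
  ⟨Y, hYL.trans (compl_subset_compl.2 hKL), hY⟩

theorem left_notMem (h : JoinedOff K a b) : a ∉ K :=
  let ⟨_, hYK, _, ha, _⟩ := h
  hYK ha

theorem right_notMem (h : JoinedOff K a b) : b ∉ K :=
  h.symm.left_notMem

end JoinedOff

theorem joinedOff_iff_mem_connectedComponentIn :
    JoinedOff K a b ↔ b ∈ connectedComponentIn Kᶜ a := by
  refine ⟨fun ⟨Y, hYK, hY, ha, hb⟩ ↦ hY.subset_connectedComponentIn ha hYK hb, fun hb ↦ ?_⟩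
  exact ⟨_, connectedComponentIn_subset _ _, isPreconnected_connectedComponentIn,
    mem_connectedComponentIn (connectedComponentIn_nonempty_iff.1 ⟨b, hb⟩), hb⟩

theorem isPreconnected_compl_iff_joinedOff :
    IsPreconnected Kᶜ ↔ ∀ a ∉ K, ∀ b ∉ K, JoinedOff K a b := by
  refine ⟨fun h a ha b hb ↦ ⟨Kᶜ, Subset.rfl, h, ha, hb⟩, fun h ↦ ?_⟩
  refine isPreconnected_of_forall_pair fun a ha b hb ↦ ?_
  obtain ⟨Y, hYK, hY, haY, hbY⟩ := h a ha b hb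
  exact ⟨Y, hYK, haY, hbY, hY⟩

theorem frontier_connectedComponentIn_compl_subset [LocallyConnectedSpace X] (hK : IsClosed K)
    (a : X) : frontier (connectedComponentIn Kᶜ a) ⊆ K := by
  intro z hz
  by_contra hzK
  have hopen (c : X) : IsOpen (connectedComponentIn Kᶜ c) := hK.isOpen_compl.connectedComponentIn
  rw [(hopen a).frontier_eq] at hz
  obtain ⟨u, huz, hua⟩ := mem_closure_iff.1 hz.1 _ (hopen z) (mem_connectedComponentIn hzK)
  have heq : connectedComponentIn Kᶜ a = connectedComponentIn Kᶜ z :=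
    (connectedComponentIn_eq hua).trans (connectedComponentIn_eq huz).symm
  exact hz.2 (heq ▸ mem_connectedComponentIn hzK)

theorem connectedComponentIn_compl_eq_of_disjoint (hKL : K ⊆ L) (ha : a ∉ K)
    (hdisj : Disjoint (connectedComponentIn Kᶜ a) L) :
    connectedComponentIn Kᶜ a = connectedComponentIn Lᶜ a :=
  (isPreconnected_connectedComponentIn.subset_connectedComponentIn (mem_connectedComponentIn ha)
    (subset_compl_iff_disjoint_right.2 hdisj)).antisymm
    (connectedComponentIn_mono a (compl_subset_compl.2 hKL))

end Components

section Plane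

open Filter

theorem not_isBounded_connectedComponentIn_of_hasLogOn {K : Set ℂ} (hK : IsClosed K) {a : ℂ}
    (ha : a ∉ K) (hlog : HasLogOn (fun z ↦ z - a) K) :
    ¬Bornology.IsBounded (connectedComponentIn Kᶜ a) := by
  classical
  intro hbdd
  set W := connectedComponentIn Kᶜ a
  obtain ⟨g, hg, hgexp⟩ := hlog
  obtain ⟨G, hG⟩ := ContinuousMap.exists_restrict_eq hK ⟨K.domRestrict g, hg.domRestrict⟩
  -- Outside the bounded component `W` this is `z - a`, but it has no zero in `W` any more.
  let Φ : ℂ → ℂ := W.piecewise (fun z ↦ Complex.exp (G z)) (fun z ↦ z - a)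
  have hΦ : Continuous Φ := by
    refine Continuous.piecewise (fun z hz ↦ ?_) (Complex.continuous_exp.comp G.continuous)
      (by fun_prop)
    have hzK := frontier_connectedComponentIn_compl_subset hK a hz
    have hGg : G z = g z := DFunLike.congr_fun hG ⟨z, hzK⟩
    rw [hGg]
    exact hgexp hzK
  have hΦ₀ (z : ℂ) : Φ z ≠ 0 := by
    by_cases hz : z ∈ W
    · simp [Φ, hz]
    · have hza : z ≠ a := fun h ↦ hz (h ▸ mem_connectedComponentIn ha)
      simpa [Φ, hz, sub_eq_zero]
  obtain ⟨R, hR, hWR⟩ := hbdd.subset_ball_lt 0 a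
  have hΦlog : HasLogOn (Φ ∘ (· + a)) (Metric.sphere 0 R) :=
    (HasLogOn.of_simplyConnected hΦ hΦ₀).comp (by fun_prop) (mapsTo_univ _ _)
  refine not_hasLogOn_id_sphere hR (hΦlog.congr fun z hz ↦ ?_)
  have hzW : z + a ∉ W := fun h ↦ by simpa [mem_sphere_zero_iff_norm.1 hz] using hWR h
  simp [Φ, hzW]

variable {X : Type*} [TopologicalSpace X] {K : Set X} {f : X → ℂ}

theorem eventually_hasLogOn_sub_iff (hK : IsCompact K) (hf : ContinuousOn f K) {c : ℂ}
    (hc : c ∉ f '' K) :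
    ∀ᶠ c' in 𝓝 c, HasLogOn (fun z ↦ f z - c') K ↔ HasLogOn (fun z ↦ f z - c) K := by
  obtain ⟨ε, hε, hball⟩ :=
    Metric.isOpen_iff.1 (hK.image_of_continuousOn hf).isClosed.isOpen_compl c hc
  have hdist {z : X} (hz : z ∈ K) : ε ≤ ‖f z - c‖ := by
    by_contra! hlt
    exact hball (mem_ball_iff_norm.2 hlt) ⟨z, hz, rfl⟩
  filter_upwards [Metric.ball_mem_nhds c (half_pos hε)] with c' hc'
  rw [mem_ball_iff_norm] at hc'
  have hcont (d : ℂ) : ContinuousOn (fun z ↦ f z - d) K := hf.sub continuousOn_const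
  refine ⟨fun h ↦ h.of_norm_sub_lt (hcont _) (hcont _) fun z hz ↦ ?_,
    fun h ↦ h.of_norm_sub_lt (hcont _) (hcont _) fun z hz ↦ ?_⟩
  · rw [sub_sub_sub_cancel_left]
    have := norm_sub_le_norm_sub_add_norm_sub (f z) c' c
    linarith [hdist hz]
  · rw [sub_sub_sub_cancel_left, norm_sub_rev]
    linarith [hdist hz]

theorem eventually_cocompact_hasLogOn_sub (hK : IsCompact K) (hf : ContinuousOn f K) :
    ∀ᶠ c in cocompact ℂ, HasLogOn (fun z ↦ f z - c) K := by
  obtain ⟨R, hR⟩ := (hK.image_of_continuousOn hf).isBounded.exists_norm_le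
  filter_upwards [tendsto_norm_cocompact_atTop.eventually (eventually_gt_atTop (max R 0))] with c hc
  have hc₀ : c ≠ 0 := norm_pos_iff.1 ((le_max_right R 0).trans_lt hc)
  have hconst : HasLogOn (fun _ ↦ -c) K :=
    ⟨fun _ ↦ Complex.log (-c), continuousOn_const, fun _ _ ↦ Complex.exp_log (neg_ne_zero.2 hc₀)⟩
  refine hconst.of_norm_sub_lt (hf.sub continuousOn_const) continuousOn_const fun z hz ↦ ?_
  simpa using (hR _ (mem_image_of_mem f hz)).trans_lt ((le_max_left R 0).trans_lt hc)

end Plane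

/-! ### Topological spheres -/

/-- A topological 2-sphere, encoded as a compact Hausdorff space in which the complement of every
point is homeomorphic to the plane. -/
class TopologicalSphere (S : Type*) [TopologicalSpace S] : Prop extends
    CompactSpace S, T2Space S where
  exists_planarChart (b : S) :
    ∃ e : OpenPartialHomeomorph S ℂ, e.source = {b}ᶜ ∧ e.target = univ

instance : TopologicalSphere SpherePt where
  exists_planarChart b := by
    have : Fact (Module.finrank ℝ (EuclideanSpace ℝ (Fin 3)) = 2 + 1) := ⟨by simp⟩
    let q : EuclideanSpace ℝ (Fin 2) ≃ₜ ℂ := Complex.orthonormalBasisOneI.repr.symm.toHomeomorph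
    exact ⟨(stereographic' 2 b).transHomeomorph q, stereographic'_source b, by simp⟩

section Sphere

open Filter

variable {S : Type*} [TopologicalSpace S] [TopologicalSphere S]

theorem exists_planarChart_mem_source (a : S) :
    ∃ e : OpenPartialHomeomorph S ℂ, a ∈ e.source := by
  obtain ⟨e, he, het⟩ := TopologicalSphere.exists_planarChart a
  obtain ⟨e', he', -⟩ := TopologicalSphere.exists_planarChart (e.symm 0)
  have hne : e.symm 0 ∈ e.source := e.map_target (het ▸ mem_univ 0)
  exact ⟨e', by simpa [he, he', eq_comm] using hne⟩

instance : LocallyConnectedSpace S := by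
  choose e he using exists_planarChart_mem_source (S := S)
  let _ : ChartedSpace ℂ S :=
    { atlas := range e
      chartAt := e
      mem_chart_source := he
      chart_mem_atlas := mem_range_self }
  exact ChartedSpace.locallyConnectedSpace ℂ S

variable {K : Set S} {a b : S} {e : OpenPartialHomeomorph S ℂ}

theorem tendsto_planarChart_cocompact (he : e.source = {b}ᶜ) (het : e.target = univ) :
    Tendsto e (𝓝[≠] b) (cocompact ℂ) := by
  refine (hasBasis_cocompact.tendsto_right_iff).2 fun C hC ↦ ?_
  have hcont : ContinuousOn e.symm C := e.continuousOn_symm.mono (het ▸ subset_univ C)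
  have hb : b ∉ e.symm '' C := by
    rintro ⟨z, -, hz⟩
    exact (he ▸ e.map_target (het ▸ mem_univ z) : e.symm z ∈ ({b}ᶜ : Set S)) hz
  filter_upwards [self_mem_nhdsWithin, mem_nhdsWithin_of_mem_nhds
    ((hC.image_of_continuousOn hcont).isClosed.isOpen_compl.mem_nhds hb)] with y hy hyC hyC'
  exact hyC ⟨e y, hyC', e.left_inv (he ▸ hy)⟩

theorem hasLogOn_of_joinedOff (he : e.source = {b}ᶜ) (het : e.target = univ) (hK : IsClosed K)
    (hab : a ≠ b) (h : JoinedOff K b a) : HasLogOn (fun z ↦ e z - e a) K := by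
  have hKe : K ⊆ e.source := he ▸ subset_compl_singleton_iff.2 h.left_notMem
  have hcont : ContinuousOn e K := e.continuousOn.mono hKe
  obtain ⟨Y, hYK, hY, hbY, haY⟩ := h
  let P (x : S) : Prop := x = b ∨ HasLogOn (fun z ↦ e z - e x) K
  have hP (x) (hx : x ∈ Y) : ∀ᶠ y in 𝓝 x, P y ↔ P x := by
    by_cases hxb : x = b
    · subst hxb
      have hlog := (tendsto_planarChart_cocompact he het).eventually
        (eventually_cocompact_hasLogOn_sub hK.isCompact hcont)
      filter_upwards [eventually_nhdsWithin_iff.1 hlog] with y hy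
      exact ⟨fun _ ↦ .inl rfl, fun _ ↦ or_iff_not_imp_left.2 hy⟩
    · have hxe : x ∈ e.source := he ▸ hxb
      have hx' : e x ∉ e '' K := fun ⟨z, hz, hzx⟩ ↦ hYK hx (e.injOn (hKe hz) hxe hzx ▸ hz)
      filter_upwards [isOpen_compl_singleton.mem_nhds hxb, (e.continuousAt hxe).eventually
        (eventually_hasLogOn_sub_iff hK.isCompact hcont hx')] with y hyb hy
      simp [P, hxb, mem_compl_singleton_iff.1 hyb, hy]
  have hPab : P b → P a := hY.induction₂' (fun x y ↦ P x → P y)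
    (fun x hx ↦ mem_nhdsWithin_of_mem_nhds ((hP x hx).mono fun y hy ↦ ⟨hy.2, hy.1⟩))
    (fun _ _ _ _ _ _ hxy hyz ↦ hyz ∘ hxy) hbY haY
  exact (hPab (.inl rfl)).resolve_left hab

theorem joinedOff_of_hasLogOn (he : e.source = {b}ᶜ) (het : e.target = univ) (hK : IsClosed K)
    (ha : a ∉ K) (hb : b ∉ K) (hab : a ≠ b) (h : HasLogOn (fun z ↦ e z - e a) K) :
    JoinedOff K b a := by
  have hKe : K ⊆ e.source := he ▸ subset_compl_singleton_iff.2 hb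
  have hae : a ∈ e.source := he ▸ hab
  have hsymm : Continuous e.symm := continuousOn_univ.1 (het ▸ e.continuousOn_symm)
  have hright (z : ℂ) : e (e.symm z) = z := e.right_inv (het ▸ mem_univ z)
  have hcompact {C : Set S} (hC : IsClosed C) (hbC : b ∉ C) : IsCompact (e '' C) :=
    hC.isCompact.image_of_continuousOn
      (e.continuousOn.mono (he ▸ subset_compl_singleton_iff.2 hbC))
  have ha' : e a ∉ e '' K := fun ⟨z, hz, hza⟩ ↦ ha (e.injOn (hKe hz) hae hza ▸ hz)
  have hlog : HasLogOn (fun z ↦ z - e a) (e '' K) :=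
    (h.comp hsymm.continuousOn (by rintro _ ⟨z, hz, rfl⟩; rwa [e.left_inv (hKe hz)])).congr
      fun z _ ↦ by simp [hright]
  set W := connectedComponentIn (e '' K)ᶜ (e a)
  have hunbdd : ¬Bornology.IsBounded W :=
    not_isBounded_connectedComponentIn_of_hasLogOn (hcompact hK hb).isClosed ha' hlog
  have hbW : b ∈ closure (e.symm '' W) := by
    by_contra hbW
    obtain ⟨U, hUW, hU, hbU⟩ := mem_nhds_iff.1 (isClosed_closure.isOpen_compl.mem_nhds hbW)
    refine hunbdd ((hcompact hU.isClosed_compl (by simpa)).isBounded.subset fun w hw ↦ ?_)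
    exact ⟨e.symm w, fun hwU ↦ hUW hwU (subset_closure ⟨w, hw, rfl⟩), hright w⟩
  refine ⟨insert b (e.symm '' W), ?_, ?_, mem_insert _ _,
    .inr ⟨e a, mem_connectedComponentIn ha', e.left_inv hae⟩⟩
  · rintro z (rfl | ⟨w, hw, rfl⟩) hz
    · exact hb hz
    · exact connectedComponentIn_subset _ _ hw ⟨_, hz, hright w⟩
  · exact (isPreconnected_connectedComponentIn.image _ hsymm.continuousOn).subset_closure
      (subset_insert _ _) (insert_subset hbW subset_closure)

end Sphere

/-! ### Separation theorems of Janiszewski -/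

section LocallyCompact

open Filter

variable {X : Type*} [TopologicalSpace X] [T2Space X] [LocallyCompactSpace X]
  [LocallyConnectedSpace X] {C U : Set X} {x y : X}

theorem exists_isCompact_isPreconnected_mem_nhds (hU : U ∈ 𝓝 x) :
    ∃ Q ∈ 𝓝 x, IsCompact Q ∧ IsPreconnected Q ∧ Q ⊆ U := by
  obtain ⟨M, hMx, hMU, hM⟩ := local_compact_nhds hU
  obtain ⟨V, hVM, hV, hxV, hVc⟩ := locallyConnectedSpace_iff_subsets_isOpen_isConnected.1
    inferInstance x M hMx
  have hclM : closure V ⊆ M := closure_minimal hVM hM.isClosed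
  exact ⟨closure V, mem_of_superset (hV.mem_nhds hxV) subset_closure,
    hM.of_isClosed_subset isClosed_closure hclM, hVc.isPreconnected.closure, hclM.trans hMU⟩

theorem exists_isCompact_isPreconnected_pair (hU : IsOpen U) (hUc : IsPreconnected U)
    (hx : x ∈ U) (hy : y ∈ U) :
    ∃ Q, IsCompact Q ∧ IsPreconnected Q ∧ Q ⊆ U ∧ x ∈ Q ∧ y ∈ Q := by
  refine hUc.induction₂
    (fun x y ↦ ∃ Q, IsCompact Q ∧ IsPreconnected Q ∧ Q ⊆ U ∧ x ∈ Q ∧ y ∈ Q) ?_ ?_ ?_ hx hy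
  · intro x hx
    obtain ⟨Q, hQx, hQ, hQc, hQU⟩ := exists_isCompact_isPreconnected_mem_nhds (hU.mem_nhds hx)
    filter_upwards [mem_nhdsWithin_of_mem_nhds hQx] with y hy
    exact ⟨Q, hQ, hQc, hQU, mem_of_mem_nhds hQx, hy⟩
  · rintro x y z - - - ⟨Q, hQ, hQc, hQU, hx, hy⟩ ⟨R, hR, hRc, hRU, hy', hz⟩
    exact ⟨Q ∪ R, hQ.union hR, hQc.union y hy hy' hRc, union_subset hQU hRU, .inl hx, .inr hz⟩
  · rintro x y - - ⟨Q, hQ, hQc, hQU, hx, hy⟩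
    exact ⟨Q, hQ, hQc, hQU, hy, hx⟩

theorem exists_isCompact_isPreconnected_between (hC : IsCompact C) (hU : IsOpen U)
    (hUc : IsPreconnected U) (hCU : C ⊆ U) :
    ∃ Q, IsCompact Q ∧ IsPreconnected Q ∧ C ⊆ Q ∧ Q ⊆ U := by
  obtain rfl | ⟨x₀, hx₀⟩ := C.eq_empty_or_nonempty
  · exact ⟨∅, isCompact_empty, isPreconnected_empty, Subset.rfl, hCU⟩
  suffices ∃ Q, IsCompact Q ∧ IsPreconnected Q ∧ x₀ ∈ Q ∧ C ⊆ Q ∧ Q ⊆ U from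
    let ⟨Q, hQ, hQc, _, hCQ, hQU⟩ := this
    ⟨Q, hQ, hQc, hCQ, hQU⟩
  refine hC.induction_on
    (p := fun C ↦ ∃ Q, IsCompact Q ∧ IsPreconnected Q ∧ x₀ ∈ Q ∧ C ⊆ Q ∧ Q ⊆ U) ?_ ?_ ?_ ?_
  · exact ⟨{x₀}, isCompact_singleton, isPreconnected_singleton, rfl, empty_subset _,
      singleton_subset_iff.2 (hCU hx₀)⟩
  · rintro C C' hCC' ⟨Q, hQ, hQc, hxQ, hCQ, hQU⟩
    exact ⟨Q, hQ, hQc, hxQ, hCC'.trans hCQ, hQU⟩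
  · rintro C C' ⟨Q, hQ, hQc, hxQ, hCQ, hQU⟩ ⟨R, hR, hRc, hxR, hCR, hRU⟩
    exact ⟨Q ∪ R, hQ.union hR, hQc.union x₀ hxQ hxR hRc, .inl hxQ, union_subset_union hCQ hCR,
      union_subset hQU hRU⟩
  · intro x hx
    obtain ⟨Q, hQx, hQ, hQc, hQU⟩ :=
      exists_isCompact_isPreconnected_mem_nhds (hU.mem_nhds (hCU hx))
    obtain ⟨R, hR, hRc, hRU, hx₀R, hxR⟩ :=
      exists_isCompact_isPreconnected_pair hU hUc (hCU hx₀) (hCU hx)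
    exact ⟨Q, mem_nhdsWithin_of_mem_nhds hQx, R ∪ Q, hR.union hQ,
      hRc.union x hxR (mem_of_mem_nhds hQx) hQc, .inl hx₀R, subset_union_right,
      union_subset hRU hQU⟩

end LocallyCompact

section Janiszewski

variable {S : Type*} [TopologicalSpace S] [TopologicalSphere S] {K L : Set S} {a b : S}

theorem JoinedOff.union (hK : IsClosed K) (hL : IsClosed L) (hKL : IsPreconnected (K ∩ L))
    (hKab : JoinedOff K a b) (hLab : JoinedOff L a b) : JoinedOff (K ∪ L) a b := by
  have ha : a ∉ K ∪ L := not_or.2 ⟨hKab.left_notMem, hLab.left_notMem⟩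
  have hb : b ∉ K ∪ L := not_or.2 ⟨hKab.right_notMem, hLab.right_notMem⟩
  obtain rfl | hne := eq_or_ne b a
  · exact .refl ha
  obtain ⟨e, he, het⟩ := TopologicalSphere.exists_planarChart a
  exact joinedOff_of_hasLogOn he het (hK.union hL) hb ha hne <|
    .union hK hL hKL (hasLogOn_of_joinedOff he het hK hne hKab)
      (hasLogOn_of_joinedOff he het hL hne hLab)

theorem isPreconnected_compl_union (hK : IsClosed K) (hL : IsClosed L)
    (hKL : IsPreconnected (K ∩ L)) (hKc : IsPreconnected Kᶜ) (hLc : IsPreconnected Lᶜ) :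
    IsPreconnected (K ∪ L)ᶜ := by
  rw [isPreconnected_compl_iff_joinedOff] at *
  exact fun a ha b hb ↦ .union hK hL hKL (hKc a (mt .inl ha) b (mt .inl hb))
    (hLc a (mt .inr ha) b (mt .inr hb))

theorem joinedOff_of_isPreconnected_compl_union {Γ : Set S} (hK : IsClosed K) (hL : IsClosed L)
    (hΓ : IsClosed Γ) (hKc : IsPreconnected K) (hLc : IsPreconnected L)
    (hcompl : IsPreconnected (K ∪ L)ᶜ) (hKLΓ : Disjoint (K ∩ L) Γ) (ha : a ∈ K ∩ L)
    (hb : b ∈ K ∩ L) : JoinedOff Γ a b := by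
  have hdisj : Disjoint (K ∩ Γ) (L ∩ Γ) :=
    disjoint_left.2 fun z hzK hzL ↦ disjoint_left.1 hKLΓ ⟨hzK.1, hzL.1⟩ hzK.2
  obtain ⟨N, M, hN, hM, hKN, hLM, hNM⟩ := normal_separation (hK.inter hΓ) (hL.inter hΓ) hdisj
  have hC : (Γ \ N) ∩ (Γ \ M) ⊆ (K ∪ L)ᶜ := by
    rintro z ⟨⟨hzΓ, hzN⟩, -, hzM⟩ (hzK | hzL)
    exacts [hzN (hKN ⟨hzK, hzΓ⟩), hzM (hLM ⟨hzL, hzΓ⟩)]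
  have hCN : IsClosed (Γ \ N) := hΓ.sdiff hN
  have hCM : IsClosed (Γ \ M) := hΓ.sdiff hM
  -- Adding `Q` makes the intersection of the two pieces of `Γ` connected.
  obtain ⟨Q, hQ, hQc, hCQ, hQKL⟩ := exists_isCompact_isPreconnected_between
    (hCN.inter hCM).isCompact (hK.union hL).isOpen_compl hcompl hC
  have hKab : JoinedOff (Γ \ N ∪ Q) a b := by
    refine ⟨K, fun z hz ↦ ?_, hKc, ha.1, hb.1⟩
    rintro (⟨hzΓ, hzN⟩ | hzQ)
    exacts [hzN (hKN ⟨hz, hzΓ⟩), hQKL hzQ (.inl hz)]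
  have hLab : JoinedOff (Γ \ M ∪ Q) a b := by
    refine ⟨L, fun z hz ↦ ?_, hLc, ha.2, hb.2⟩
    rintro (⟨hzΓ, hzM⟩ | hzQ)
    exacts [hzM (hLM ⟨hz, hzΓ⟩), hQKL hzQ (.inr hz)]
  have hinter : (Γ \ N ∪ Q) ∩ (Γ \ M ∪ Q) = Q := by
    rw [← inter_union_distrib_right, union_eq_right.2 hCQ]
  refine (JoinedOff.union (hCN.union hQ.isClosed) (hCM.union hQ.isClosed) (by rwa [hinter])
    hKab hLab).mono fun z hz ↦ ?_
  by_cases hzN : z ∈ N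
  · exact .inr (.inl ⟨hz, disjoint_left.1 hNM hzN⟩)
  · exact .inl (.inl ⟨hz, hzN⟩)

theorem not_isPreconnected_compl_union (hK : IsClosed K) (hL : IsClosed L)
    (hKc : IsPreconnected K) (hLc : IsPreconnected L) (hKL : ¬IsPreconnected (K ∩ L)) :
    ¬IsPreconnected (K ∪ L)ᶜ := by
  intro hcompl
  simp only [isPreconnected_iff_subset_of_fully_disjoint_closed (hK.inter hL), not_forall,
    not_or] at hKL
  obtain ⟨u, v, hu, hv, huv, hdisj, hnu, hnv⟩ := hKL
  obtain ⟨a, ha, hau⟩ := not_subset.1 hnu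
  obtain ⟨b, hb, hbv⟩ := not_subset.1 hnv
  obtain ⟨O, P, hO, hP, huO, hvP, hOP⟩ := normal_separation hu hv hdisj
  obtain ⟨Y, hYOP, hY, haY, hbY⟩ := joinedOff_of_isPreconnected_compl_union hK hL
    (hO.union hP).isClosed_compl hKc hLc hcompl
    (disjoint_compl_right_iff_subset.2 (huv.trans (union_subset_union huO hvP))) ha hb
  obtain ⟨z, -, hzO, hzP⟩ := hY O P hO hP (compl_compl (O ∪ P) ▸ hYOP)
    ⟨b, hbY, huO ((huv hb).resolve_right hbv)⟩ ⟨a, haY, hvP ((huv ha).resolve_left hau)⟩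
  exact disjoint_left.1 hOP hzO hzP

end Janiszewski

/-! ### Arcs -/

section Arcs

open Filter

variable {X : Type*} [TopologicalSpace X] {K A B : Set X} {a b p : X}

/-- `IsArc K a b`: the set `K` is a simple arc from `a` to `b`, parametrized by `Icc 0 1`. -/
def IsArc (K : Set X) (a b : X) : Prop :=
  ∃ f : ℝ → X, ContinuousOn f (Icc 0 1) ∧ InjOn f (Icc 0 1) ∧ f 0 = a ∧ f 1 = b ∧
    K = f '' Icc 0 1

theorem isArc_image_Icc {f : ℝ → X} {s t : ℝ} (hst : s < t) (hf : ContinuousOn f (Icc s t))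
    (hinj : InjOn f (Icc s t)) : IsArc (f '' Icc s t) (f s) (f t) := by
  have himage : AffineMap.lineMap s t '' Icc (0 : ℝ) 1 = Icc s t := by
    rw [← segment_eq_image_lineMap, segment_eq_Icc hst.le]
  have hmaps : MapsTo (AffineMap.lineMap s t) (Icc (0 : ℝ) 1) (Icc s t) :=
    mapsTo_iff_image_subset.2 himage.subset
  refine ⟨f ∘ AffineMap.lineMap s t, hf.comp AffineMap.lineMap_continuous.continuousOn hmaps,
    hinj.comp (AffineMap.lineMap_injective ℝ hst.ne).injOn hmaps, by simp, by simp, ?_⟩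
  rw [image_comp, himage]

namespace IsArc

theorem symm (h : IsArc K a b) : IsArc K b a := by
  obtain ⟨f, hf, hinj, rfl, rfl, rfl⟩ := h
  have hmaps : MapsTo (fun t : ℝ ↦ 1 - t) (Icc 0 1) (Icc 0 1) := fun t ht ↦ by
    simpa [and_comm] using ht
  refine ⟨f ∘ fun t ↦ 1 - t, hf.comp (by fun_prop) hmaps,
    hinj.comp (sub_right_injective.injOn) hmaps, by simp, by simp, ?_⟩
  rw [image_comp, image_const_sub_Icc]
  simp

theorem left_mem (h : IsArc K a b) : a ∈ K := by
  obtain ⟨f, -, -, rfl, -, rfl⟩ := h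
  exact mem_image_of_mem f (by simp)

theorem right_mem (h : IsArc K a b) : b ∈ K :=
  h.symm.left_mem

theorem ne (h : IsArc K a b) : a ≠ b := by
  obtain ⟨f, -, hinj, rfl, rfl, -⟩ := h
  exact hinj.ne (by simp) (by simp) zero_ne_one

theorem isCompact (h : IsArc K a b) : IsCompact K := by
  obtain ⟨f, hf, -, -, -, rfl⟩ := h
  exact isCompact_Icc.image_of_continuousOn hf

theorem isClosed [T2Space X] (h : IsArc K a b) : IsClosed K :=
  h.isCompact.isClosed

theorem isPreconnected (h : IsArc K a b) : IsPreconnected K := by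
  obtain ⟨f, hf, -, -, -, rfl⟩ := h
  exact isPreconnected_Icc.image f hf

theorem isPreconnected_diff_left (h : IsArc K a b) : IsPreconnected (K \ {a}) := by
  obtain ⟨f, hf, hinj, rfl, -, rfl⟩ := h
  rw [← image_singleton, ← hinj.image_sdiff_subset (by simp), Icc_sdiff_left]
  exact isPreconnected_Ioc.image f (hf.mono Ioc_subset_Icc_self)

theorem isPreconnected_diff_right (h : IsArc K a b) : IsPreconnected (K \ {b}) :=
  h.symm.isPreconnected_diff_left

theorem isPreconnected_diff (h : IsArc K a b) : IsPreconnected (K \ {a, b}) := by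
  obtain ⟨f, hf, hinj, rfl, rfl, rfl⟩ := h
  rw [← image_pair, ← hinj.image_sdiff_subset (by simp [pair_subset_iff]), Icc_sdiff_both]
  exact isPreconnected_Ioo.image f (hf.mono Ioo_subset_Icc_self)

theorem subset_closure_diff (h : IsArc K a b) : K ⊆ closure (K \ {a, b}) := by
  obtain ⟨f, hf, hinj, rfl, rfl, rfl⟩ := h
  rw [← image_pair, ← hinj.image_sdiff_subset (by simp [pair_subset_iff]), Icc_sdiff_both]
  have hclosure : closure (Ioo (0 : ℝ) 1) = Icc 0 1 := closure_Ioo zero_ne_one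
  exact (image_mono hclosure.ge).trans (hclosure.symm ▸ hf).image_closure

theorem exists_split (h : IsArc K a b) (hp : p ∈ K) (hpa : p ≠ a) (hpb : p ≠ b) :
    ∃ A B, IsArc A a p ∧ IsArc B p b ∧ A ∪ B = K ∧ A ∩ B = {p} := by
  obtain ⟨f, hf, hinj, rfl, rfl, rfl⟩ := h
  obtain ⟨t, ht, rfl⟩ := hp
  have ht₀ : 0 < t := ht.1.lt_of_ne (by rintro rfl; exact hpa rfl)
  have ht₁ : t < 1 := ht.2.lt_of_ne (by rintro rfl; exact hpb rfl)
  have hleft : Icc 0 t ⊆ Icc 0 1 := Icc_subset_Icc_right ht.2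
  have hright : Icc t 1 ⊆ Icc 0 1 := Icc_subset_Icc_left ht.1
  refine ⟨f '' Icc 0 t, f '' Icc t 1, isArc_image_Icc ht₀ (hf.mono hleft) (hinj.mono hleft),
    isArc_image_Icc ht₁ (hf.mono hright) (hinj.mono hright), ?_, ?_⟩
  · rw [← image_union, Icc_union_Icc_eq_Icc ht.1 ht.2]
  · rw [← hinj.image_inter hleft hright, Icc_inter_Icc_eq_singleton ht.1 ht.2, image_singleton]

theorem exists_param {s t : ℝ} (h : IsArc K a b) (hst : s < t) :
    ∃ f : ℝ → X, ContinuousOn f (Icc s t) ∧ InjOn f (Icc s t) ∧ f s = a ∧ f t = b ∧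
      K = f '' Icc s t := by
  obtain ⟨f, hf, hinj, rfl, rfl, rfl⟩ := h
  have hts : t - s ≠ 0 := (sub_pos.2 hst).ne'
  let φ : ℝ → ℝ := fun r ↦ (t - s)⁻¹ * r + -((t - s)⁻¹ * s)
  have hφs : φ s = 0 := by simp [φ]
  have hφt : φ t = 1 := by simp only [φ]; field_simp; ring
  have himage : φ '' Icc s t = Icc 0 1 := by
    rw [image_affine_Icc' (inv_pos.2 (sub_pos.2 hst))]
    exact congr_arg₂ Icc hφs hφt
  have hmaps : MapsTo φ (Icc s t) (Icc 0 1) := mapsTo_iff_image_subset.2 himage.subset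
  have hφ : φ.Injective := fun r r' h ↦ mul_left_cancel₀ (inv_ne_zero hts) (add_right_cancel h)
  exact ⟨f ∘ φ, hf.comp (by fun_prop) hmaps, hinj.comp hφ.injOn hmaps, by simp [hφs],
    by simp [hφt], by rw [image_comp, himage]⟩

theorem union (hA : IsArc A a p) (hB : IsArc B p b) (hAB : A ∩ B = {p}) :
    IsArc (A ∪ B) a b := by
  classical
  obtain ⟨f, hf, hfinj, rfl, rfl, rfl⟩ := hA.exists_param zero_lt_one
  obtain ⟨g, hg, hginj, hgf, rfl, rfl⟩ := hB.exists_param one_lt_two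
  set h : ℝ → X := (Iic 1).piecewise f g
  have hfh : EqOn f h (Icc 0 1) := fun t ht ↦ by simp [h, ht.2]
  have hgh : EqOn g h (Icc 1 2) := fun t ht ↦ by
    obtain rfl | hlt := ht.1.eq_or_lt
    · simp [h, hgf]
    · simp [h, hlt.not_ge]
  have hunion : Icc 0 1 ∪ Icc 1 2 = Icc (0 : ℝ) 2 :=
    Icc_union_Icc_eq_Icc zero_le_one one_le_two
  have hcont : ContinuousOn h (Icc 0 2) := hunion ▸ (hf.congr hfh.symm).union_of_isClosed
    (hg.congr hgh.symm) isClosed_Icc isClosed_Icc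
  have hIoc : Ioc 1 2 ⊆ Icc (1 : ℝ) 2 := Ioc_subset_Icc_self
  have hinj : InjOn h (Icc 0 2) := by
    rw [← Icc_union_Ioc_eq_Icc zero_le_one one_le_two,
      injOn_union (disjoint_left.2 fun r hr hr' ↦ hr'.1.not_ge hr.2)]
    refine ⟨hfinj.congr hfh, (hginj.congr hgh).mono hIoc, fun r hr r' hr' heq ↦ hr'.1.ne ?_⟩
    rw [← hfh hr, ← hgh (hIoc hr')] at heq
    have hp : f r = f 1 := hAB.subset ⟨⟨r, hr, rfl⟩, r', hIoc hr', heq.symm⟩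
    exact hginj (by simp) (hIoc hr') (hgf.trans (hp.symm.trans heq))
  rw [hfh.image_eq, hgh.image_eq, ← image_union, hunion, hfh (by simp), hgh (by simp)]
  exact isArc_image_Icc two_pos hcont hinj

theorem exists_split_nhds {z : X} {U : Set X} (h : IsArc K a b) (hz : z ∈ K \ {a, b})
    (hU : U ∈ 𝓝 z) :
    ∃ A B p q, IsArc A a p ∧ IsArc B q b ∧ A ∪ B ⊆ K ∧ K ⊆ A ∪ B ∪ U ∧ Disjoint A B ∧
      z ∉ A ∪ B := by
  obtain ⟨f, hf, hinj, rfl, rfl, rfl⟩ := h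
  obtain ⟨⟨t, ht, rfl⟩, htne⟩ := hz
  have htIoo : t ∈ Ioo 0 1 :=
    ⟨ht.1.lt_of_ne (by rintro rfl; simp at htne), ht.2.lt_of_ne (by rintro rfl; simp at htne)⟩
  have hIoo : Ioo 0 1 ∈ 𝓝 t := isOpen_Ioo.mem_nhds htIoo
  have hft : f ⁻¹' U ∩ Ioo 0 1 ∈ 𝓝 t := inter_mem
    (hf.continuousAt (mem_of_superset hIoo Ioo_subset_Icc_self) hU) hIoo
  obtain ⟨ε, hε, hball⟩ := Metric.nhds_basis_closedBall.mem_iff.1 hft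
  rw [Real.closedBall_eq_Icc] at hball
  have hs := (hball (left_mem_Icc.2 (by linarith))).2
  have hs' := (hball (right_mem_Icc.2 (by linarith))).2
  have hleft : Icc 0 (t - ε) ⊆ Icc 0 1 := Icc_subset_Icc_right hs.2.le
  have hright : Icc (t + ε) 1 ⊆ Icc 0 1 := Icc_subset_Icc_left hs'.1.le
  refine ⟨f '' Icc 0 (t - ε), f '' Icc (t + ε) 1, f (t - ε), f (t + ε),
    isArc_image_Icc hs.1 (hf.mono hleft) (hinj.mono hleft),
    isArc_image_Icc hs'.2 (hf.mono hright) (hinj.mono hright),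
    union_subset (image_mono hleft) (image_mono hright), ?_, ?_, ?_⟩
  · rintro _ ⟨r, hr, rfl⟩
    obtain hr₁ | hr₁ := le_total r (t - ε)
    · exact .inl (.inl ⟨r, ⟨hr.1, hr₁⟩, rfl⟩)
    obtain hr₂ | hr₂ := le_total (t + ε) r
    · exact .inl (.inr ⟨r, ⟨hr₂, hr.2⟩, rfl⟩)
    · exact .inr (hball ⟨hr₁, hr₂⟩).1
  · rw [disjoint_iff_inter_eq_empty, ← hinj.image_inter hleft hright, image_eq_empty,
      Icc_inter_Icc, Icc_eq_empty_of_lt (inf_le_left.trans_lt (lt_sup_of_lt_right (by linarith)))]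
  · rw [← image_union, hinj.mem_image_iff (union_subset hleft hright) ht]
    rintro (hr | hr) <;> linarith [hr.1, hr.2]

/-- Pulled back along the parametrization, `f` has a logarithm because `ℝ` is simply connected. -/
theorem hasLogOn [T2Space X] {f : X → ℂ} (h : IsArc K a b) (hf : ContinuousOn f K)
    (hf₀ : ∀ z ∈ K, f z ≠ 0) : HasLogOn f K := by
  obtain ⟨g, hg, hinj, -, -, rfl⟩ := h
  let r : X → ℝ := Function.invFunOn g (Icc 0 1)
  have hr {t : ℝ} (ht : t ∈ Icc 0 1) : r (g t) = t := hinj.leftInvOn_invFunOn ht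
  have hcont : ContinuousOn r (g '' Icc 0 1) := by
    refine continuousOn_iff_isClosed.2 fun C hC ↦ ⟨g '' (Icc 0 1 ∩ C),
      ((isCompact_Icc.inter_right hC).image_of_continuousOn (hg.mono inter_subset_left)).isClosed,
      ?_⟩
    ext z
    constructor
    · rintro ⟨hz, t, ht, rfl⟩
      exact ⟨⟨t, ⟨ht, hr ht ▸ hz⟩, rfl⟩, t, ht, rfl⟩
    · rintro ⟨⟨t, ht, rfl⟩, hz⟩
      exact ⟨by simpa [hr ht.1] using ht.2, hz⟩
  let F : ℝ → ℂ := IccExtend zero_le_one ((Icc 0 1).domRestrict (f ∘ g))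
  have hF : HasLogOn F univ := HasLogOn.of_simplyConnected
    (hf.comp hg (mapsTo_image g _)).domRestrict.Icc_extend'
    fun t ↦ hf₀ _ ⟨_, (projIcc 0 1 zero_le_one t).2, rfl⟩
  refine (hF.comp hcont (mapsTo_univ _ _)).congr ?_
  rintro _ ⟨t, ht, rfl⟩
  simp [F, hr ht, IccExtend_of_mem _ _ ht]

theorem isPreconnected_compl {S : Type*} [TopologicalSpace S] [TopologicalSphere S] {K : Set S}
    {a b : S} (h : IsArc K a b) : IsPreconnected Kᶜ := by
  refine isPreconnected_compl_iff_joinedOff.2 fun p hp q hq ↦ ?_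
  obtain rfl | hqp := eq_or_ne q p
  · exact .refl hq
  obtain ⟨e, he, het⟩ := TopologicalSphere.exists_planarChart p
  have hKe : K ⊆ e.source := he ▸ subset_compl_singleton_iff.2 hp
  refine joinedOff_of_hasLogOn he het h.isClosed hq hp hqp
    (h.hasLogOn ((e.continuousOn.mono hKe).sub continuousOn_const) fun z hz hzq ↦ hq ?_)
  exact e.injOn (hKe hz) (he ▸ hqp) (sub_eq_zero.1 hzq) ▸ hz

end IsArc

end Arcs

/-! ### Jordan curves -/

/-- A Jordan curve, encoded as the union of two arcs that share exactly their endpoints. -/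
def IsJordanCurve {X : Type*} [TopologicalSpace X] (J : Set X) : Prop :=
  ∃ a b A B, IsArc A a b ∧ IsArc B a b ∧ A ∩ B = {a, b} ∧ J = A ∪ B

section Jordan

variable {S : Type*} [TopologicalSpace S] [TopologicalSphere S] {J A B : Set S} {a b c p : S}

/-- Removing a neighbourhood of an inner point of `A` from the curve `A ∪ B` leaves a chain of three
arcs. -/
theorem IsArc.exists_subset_isPreconnected_compl {U : Set S} {z : S} (hA : IsArc A a b)
    (hB : IsArc B a b) (hAB : A ∩ B = {a, b}) (hz : z ∈ A \ {a, b}) (hU : U ∈ 𝓝 z) :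
    ∃ K ⊆ A ∪ B, A ∪ B ⊆ K ∪ U ∧ z ∉ K ∧ IsPreconnected Kᶜ := by
  obtain ⟨A₁, A₂, p, q, hA₁, hA₂, hsub, hcover, hdisj, hzA⟩ := hA.exists_split_nhds hz hU
  have hend {w : S} (hw : w ∈ A₁ ∪ A₂) (hwB : w ∈ B) : w = a ∨ w = b := hAB.subset ⟨hsub hw, hwB⟩
  have hA₁B : A₁ ∩ B = {a} := by
    refine Subset.antisymm (fun w ⟨hw, hwB⟩ ↦ (hend (.inl hw) hwB).resolve_right ?_)
      (singleton_subset_iff.2 ⟨hA₁.left_mem, hB.left_mem⟩)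
    rintro rfl
    exact disjoint_left.1 hdisj hw hA₂.right_mem
  have hA₁BA₂ : (A₁ ∪ B) ∩ A₂ = {b} := by
    rw [union_inter_distrib_right, hdisj.inter_eq, empty_union]
    refine Subset.antisymm (fun w ⟨hwB, hw⟩ ↦ (hend (.inr hw) hwB).resolve_left ?_)
      (singleton_subset_iff.2 ⟨hB.right_mem, hA₂.right_mem⟩)
    rintro rfl
    exact disjoint_left.1 hdisj hA₁.left_mem hw
  have hzB : z ∉ B := fun h ↦ hz.2 (hAB.subset ⟨hz.1, h⟩)
  refine ⟨A₁ ∪ B ∪ A₂, by grind, by grind, by grind, ?_⟩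
  exact isPreconnected_compl_union (hA₁.isClosed.union hB.isClosed) hA₂.isClosed
    (hA₁BA₂ ▸ isPreconnected_singleton)
    (isPreconnected_compl_union hA₁.isClosed hB.isClosed (hA₁B ▸ isPreconnected_singleton)
      hA₁.isPreconnected_compl hB.isPreconnected_compl) hA₂.isPreconnected_compl

theorem IsArc.subset_closure_connectedComponentIn (hA : IsArc A a b) (hB : IsArc B a b)
    (hAB : A ∩ B = {a, b}) (hc : c ∉ A ∪ B) :
    A ⊆ closure (connectedComponentIn (A ∪ B)ᶜ c) := by
  set G := connectedComponentIn (A ∪ B)ᶜ c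
  refine hA.subset_closure_diff.trans (closure_minimal (fun z hz ↦ ?_) isClosed_closure)
  by_contra hzG
  obtain ⟨K, hKAB, hABK, hzK, hK⟩ := hA.exists_subset_isPreconnected_compl hB hAB hz
    (isClosed_closure.isOpen_compl.mem_nhds hzG)
  have hclosed : IsClosed (A ∪ B) := hA.isClosed.union hB.isClosed
  have hcG : c ∈ G := mem_connectedComponentIn hc
  have hfrontier : closure G ∩ Kᶜ ⊆ G := by
    rintro w ⟨hwcl, hwK⟩
    by_contra hwG
    have hwAB : w ∈ A ∪ B := frontier_connectedComponentIn_compl_subset hclosed c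
      ⟨hwcl, fun h ↦ hwG (interior_subset h)⟩
    exact (hABK hwAB).elim hwK fun h ↦ h hwcl
  have hKG : Kᶜ ⊆ G := hK.subset_of_closure_inter_subset
    hclosed.isOpen_compl.connectedComponentIn ⟨c, fun h ↦ hc (hKAB h), hcG⟩ hfrontier
  exact hzG (subset_closure (hKG hzK))

namespace IsJordanCurve

theorem isClosed (hJ : IsJordanCurve J) : IsClosed J := by
  obtain ⟨a, b, A, B, hA, hB, -, rfl⟩ := hJ
  exact hA.isClosed.union hB.isClosed

theorem not_isPreconnected_compl (hJ : IsJordanCurve J) : ¬IsPreconnected Jᶜ := by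
  obtain ⟨a, b, A, B, hA, hB, hAB, rfl⟩ := hJ
  refine not_isPreconnected_compl_union hA.isClosed hB.isClosed hA.isPreconnected
    hB.isPreconnected fun hpair ↦ ?_
  exact (hAB ▸ hpair).infinite_of_nontrivial (nontrivial_pair hA.ne) (toFinite {a, b})

theorem frontier_connectedComponentIn_compl (hJ : IsJordanCurve J) (hc : c ∉ J) :
    frontier (connectedComponentIn Jᶜ c) = J := by
  refine (frontier_connectedComponentIn_compl_subset hJ.isClosed c).antisymm ?_
  rw [hJ.isClosed.isOpen_compl.connectedComponentIn.frontier_eq]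
  refine subset_sdiff.2 ⟨?_, (subset_compl_iff_disjoint_left.1 (connectedComponentIn_subset _ _))⟩
  obtain ⟨a, b, A, B, hA, hB, hAB, rfl⟩ := hJ
  refine union_subset (hA.subset_closure_connectedComponentIn hB hAB hc) ?_
  rw [union_comm] at hc ⊢
  exact hB.subset_closure_connectedComponentIn hA (inter_comm A B ▸ hAB) hc

theorem exists_not_joinedOff_of_crossesAt {γ : Set S} (hJ : IsJordanCurve J)
    (h : CrossesAt J γ p) :
    ∃ z₁ ∈ γ \ J, ∃ z₂ ∈ γ \ J, ¬JoinedOff J z₁ z₂ := by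
  obtain ⟨hpJ, -, hV⟩ := h
  obtain ⟨V, hVp, -, C₁, C₂, hVC, -, hC₁, hC₂, ⟨z₁, hz₁γ, hz₁⟩, ⟨z₂, hz₂γ, hz₂⟩⟩ :=
    hV univ Filter.univ_mem
  have hC₁J : C₁ ⊆ Jᶜ := fun z hz ↦ (hVC.ge (.inl hz)).2
  have hC₂J : C₂ ⊆ Jᶜ := fun z hz ↦ (hVC.ge (.inr hz)).2
  refine ⟨z₁, ⟨hz₁γ, hC₁J hz₁⟩, z₂, ⟨hz₂γ, hC₂J hz₂⟩, fun hjoin ↦ ?_⟩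
  have hlocal (u : S) (hu : u ∈ V \ J) : JoinedOff J z₁ u := by
    obtain hu | hu := hVC.le hu
    · exact ⟨C₁, hC₁J, hC₁, hz₁, hu⟩
    · exact hjoin.trans ⟨C₂, hC₂J, hC₂, hz₂, hu⟩
  refine hJ.not_isPreconnected_compl (isPreconnected_compl_iff_joinedOff.2 fun c hc d hd ↦ ?_)
  have hfar (c : S) (hc : c ∉ J) : JoinedOff J z₁ c := by
    have hpc : p ∈ frontier (connectedComponentIn Jᶜ c) :=
      (hJ.frontier_connectedComponentIn_compl hc).ge hpJ
    obtain ⟨u, huV, huc⟩ := mem_closure_iff_nhds.1 hpc.1 V hVp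
    exact (hlocal u ⟨huV, connectedComponentIn_subset _ _ huc⟩).trans
      (joinedOff_iff_mem_connectedComponentIn.2 huc).symm
  exact (hfar c hc).symm.trans (hfar d hd)

theorem not_joinedOff_of_crossesAt {γ Γ₁ Γ₂ : Set S} (hJ : IsJordanCurve J)
    (h : CrossesAt J γ p) (hΓ₁ : IsPreconnected Γ₁) (hΓ₂ : IsPreconnected Γ₂)
    (hΓ₁J : Γ₁ ⊆ Jᶜ) (hΓ₂J : Γ₂ ⊆ Jᶜ) (hγ : γ \ J ⊆ Γ₁ ∪ Γ₂) (ha : a ∈ Γ₁) (hb : b ∈ Γ₂) :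
    ¬JoinedOff J a b := by
  intro hab
  obtain ⟨z₁, hz₁, z₂, hz₂, hz⟩ := hJ.exists_not_joinedOff_of_crossesAt h
  have hjoin (z : S) (hz : z ∈ γ \ J) : JoinedOff J a z := by
    obtain hz | hz := hγ hz
    · exact ⟨Γ₁, hΓ₁J, hΓ₁, ha, hz⟩
    · exact hab.trans ⟨Γ₂, hΓ₂J, hΓ₂, hb, hz⟩
  exact hz ((hjoin z₁ hz₁).symm.trans (hjoin z₂ hz₂))

end IsJordanCurve

end Jordan

theorem CrossesAt.union {X : Type*} [TopologicalSpace X] {σ β γ : Set X} {p : X}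
    (h : CrossesAt σ γ p) (hβ : IsClosed β) (hp : p ∉ β) : CrossesAt (σ ∪ β) γ p := by
  obtain ⟨hpσ, hpγ, hV⟩ := h
  refine ⟨.inl hpσ, hpγ, fun U hU ↦ ?_⟩
  obtain ⟨V, hVp, hVU, C₁, C₂, hVC, hC⟩ := hV _ (Filter.inter_mem hU (hβ.isOpen_compl.mem_nhds hp))
  refine ⟨V, hVp, hVU.trans inter_subset_left, C₁, C₂, ?_, hC⟩
  grind

/-! ### Crossings in good drawings -/

namespace GoodDrawing

section Arcs

variable {n : ℕ} {X : Type*} [TopologicalSpace X] {D : GoodDrawing n X} {F : Set X}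
  {u v w x y : Fin n} {p q : X}

theorem isArc_arc (D : GoodDrawing n X) (huv : u ≠ v) : IsArc (D.arc u v) (D.vtx u) (D.vtx v) :=
  D.isArc u v huv

theorem eq_vtx_of_mem_arc (huv : u ≠ v) (huw : u ≠ w) (hvw : v ≠ w) (hp : p ∈ D.arc u v)
    (hp' : p ∈ D.arc u w) : p = D.vtx u :=
  (D.adj_arcs u v w huv huw hvw).subset ⟨hp, hp'⟩

theorem isArc_path (D : GoodDrawing n X) (huv : u ≠ v) (huw : u ≠ w) (hvw : v ≠ w) :
    IsArc (D.arc u v ∪ D.arc v w) (D.vtx u) (D.vtx w) :=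
  (D.isArc_arc huv).union (D.isArc_arc hvw) <| by
    rw [D.arc_symm u v, D.adj_arcs v u w huv.symm hvw huw]

theorem arc_subset_image {W : Set (Fin n)} (hu : u ∈ W) (hv : v ∈ W) (huv : u ≠ v) :
    D.arc u v ⊆ D.image W :=
  fun _ hz ↦ .inr (mem_iUnion₂.2 ⟨u, hu, mem_iUnion₂.2 ⟨v, hv, mem_iUnion.2 ⟨huv, hz⟩⟩⟩)

protected theorem image_mono {W W' : Set (Fin n)} (hW : W ⊆ W') : D.image W ⊆ D.image W' :=
  union_subset_union (image_mono hW)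
    (biUnion_mono hW fun _ _ ↦ biUnion_mono hW fun _ _ ↦ Subset.rfl)

theorem IsFace.subset_compl (hF : D.IsFace F) : F ⊆ (D.image univ)ᶜ := by
  obtain ⟨b, -, rfl⟩ := hF
  exact connectedComponentIn_subset _ _

theorem isJordanCurve_tri (D : GoodDrawing n X) (huv : u ≠ v) (huw : u ≠ w) (hvw : v ≠ w) :
    IsJordanCurve (D.tri u v w) := by
  refine ⟨_, _, _, _, D.isArc_path huv huw hvw, D.isArc_arc huw, ?_, rfl⟩
  rw [union_inter_distrib_right, D.adj_arcs u v w huv huw hvw, D.arc_symm v w, D.arc_symm u w,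
    D.adj_arcs w v u hvw.symm huw.symm huv.symm]
  rfl

theorem vtx_notMem_tri (D : GoodDrawing n X) (hxu : x ≠ u) (hxv : x ≠ v) (hxw : x ≠ w)
    (huv : u ≠ v) (huw : u ≠ w) (hvw : v ≠ w) : D.vtx x ∉ D.tri u v w := by
  rintro ((hx | hx) | hx)
  exacts [D.vtx_not_mem u v x huv hxu hxv hx, D.vtx_not_mem v w x hvw hxv hxw hx,
    D.vtx_not_mem u w x huw hxu hxw hx]

theorem tri_subset_image (huv : u ≠ v) (huw : u ≠ w) (hvw : v ≠ w) :
    D.tri u v w ⊆ D.image univ :=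
  union_subset (union_subset (arc_subset_image trivial trivial huv)
    (arc_subset_image trivial trivial hvw)) (arc_subset_image trivial trivial huw)

/-- The closed curve that is the drawing of the 4-cycle `(a, b, c, d, a)`. -/
def quad (D : GoodDrawing n X) (a b c d : Fin n) : Set X :=
  D.arc a b ∪ D.arc b c ∪ D.arc c d ∪ D.arc d a

theorem quad_comm (D : GoodDrawing n X) (a b c d : Fin n) : D.quad b a d c = D.quad a b c d := by
  simp only [quad, D.arc_symm b a, D.arc_symm a d, D.arc_symm d c, D.arc_symm c b]
  grind

theorem image_eq_quad_union (D : GoodDrawing n X) (hvw : v ≠ w) (hvx : v ≠ x) (hvy : v ≠ y)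
    (hwx : w ≠ x) (hwy : w ≠ y) (hxy : x ≠ y) :
    D.image {v, w, x, y} = D.quad v x w y ∪ (D.arc v w ∪ D.arc x y) := by
  have hv := (D.isArc_arc hvw).left_mem
  have hw := (D.isArc_arc hvw).right_mem
  have hx := (D.isArc_arc hxy).left_mem
  have hy := (D.isArc_arc hxy).right_mem
  ext z
  simp only [image, quad, mem_union, mem_image, mem_iUnion, mem_insert_iff, mem_singleton_iff]
  grind [D.arc_symm]

/-- `D.IsCrossing v w x y p`: the edge-arcs `D[vw]` and `D[xy]` of a `K_4` subgraph cross in `p`. -/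
structure IsCrossing (D : GoodDrawing n X) (v w x y : Fin n) (p : X) : Prop where
  vw : v ≠ w
  vx : v ≠ x
  vy : v ≠ y
  wx : w ≠ x
  wy : w ≠ y
  xy : x ≠ y
  mem_left : p ∈ D.arc v w
  mem_right : p ∈ D.arc x y
  notMem_vtx : p ∉ range D.vtx

namespace IsCrossing

theorem swap (h : D.IsCrossing v w x y p) : D.IsCrossing x y v w p :=
  ⟨h.xy, h.vx.symm, h.wx.symm, h.vy.symm, h.wy.symm, h.vw, h.mem_right, h.mem_left, h.notMem_vtx⟩

theorem swap_left (h : D.IsCrossing v w x y p) : D.IsCrossing w v x y p :=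
  ⟨h.vw.symm, h.wx, h.wy, h.vx, h.vy, h.xy, D.arc_symm v w ▸ h.mem_left, h.mem_right,
    h.notMem_vtx⟩

theorem swap_right (h : D.IsCrossing v w x y p) : D.IsCrossing v w y x p :=
  h.swap.swap_left.swap

theorem ne_vtx (h : D.IsCrossing v w x y p) (u : Fin n) : p ≠ D.vtx u :=
  fun hp ↦ h.notMem_vtx ⟨u, hp.symm⟩

theorem eq_of_mem (h : D.IsCrossing v w x y p) (hq : q ∈ D.arc v w) (hq' : q ∈ D.arc x y) :
    q = p :=
  (D.indep_arcs v w x y h.vw h.xy h.vx h.vy h.wx h.wy).1 ⟨hq, hq'⟩ ⟨h.mem_left, h.mem_right⟩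

theorem crossesAt (h : D.IsCrossing v w x y p) : CrossesAt (D.arc v w) (D.arc x y) p :=
  ((D.indep_arcs v w x y h.vw h.xy h.vx h.vy h.wx h.wy).2 p ⟨h.mem_left, h.mem_right⟩).1

theorem exists_split (h : D.IsCrossing v w x y p) :
    ∃ A B, IsArc A (D.vtx x) p ∧ IsArc B p (D.vtx y) ∧ A ∪ B = D.arc x y ∧ A ∩ B = {p} :=
  (D.isArc_arc h.xy).exists_split h.mem_right (h.ne_vtx x) (h.ne_vtx y)

theorem tri_inter_arc (h : D.IsCrossing v w x y p) :
    D.tri v w x ∩ D.arc x y = {D.vtx x, p} := by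
  have hx : D.vtx x ∈ D.arc x y := (D.isArc_arc h.xy).left_mem
  have hx' : D.vtx x ∈ D.arc v x := (D.isArc_arc h.vx).right_mem
  refine Subset.antisymm ?_ (pair_subset ⟨.inr hx', hx⟩ ⟨.inl (.inl h.mem_left), h.mem_right⟩)
  rintro z ⟨(hz | hz) | hz, hzxy⟩
  · exact .inr (h.eq_of_mem hz hzxy)
  · exact .inl (eq_vtx_of_mem_arc h.wx.symm h.xy h.wy (D.arc_symm w x ▸ hz) hzxy)
  · exact .inl (eq_vtx_of_mem_arc h.vx.symm h.xy h.vy (D.arc_symm v x ▸ hz) hzxy)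

theorem notMem_arc (h : D.IsCrossing v w x y p) : p ∉ D.arc v x :=
  fun hp ↦ h.ne_vtx v (eq_vtx_of_mem_arc h.vw h.vx h.wx h.mem_left hp)

theorem disjoint_arc_of_split {A B : Set X} (h : D.IsCrossing v w x y p) (hB : IsArc B p (D.vtx y))
    (hAB : A ∪ B = D.arc x y) (hABp : A ∩ B = {p}) (hux : u ≠ x) (huy : u ≠ y) :
    Disjoint A (D.arc y u) := by
  refine disjoint_left.2 fun z hzA hz ↦ ?_
  have hzyx : z ∈ D.arc y x := D.arc_symm x y ▸ hAB.subset (.inl hzA)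
  obtain rfl := eq_vtx_of_mem_arc h.xy.symm huy.symm hux.symm hzyx hz
  exact h.ne_vtx y (hABp.subset ⟨hzA, hB.right_mem⟩).symm

theorem isJordanCurve_corner {V A : Set X} (h : D.IsCrossing v w x y p)
    (hV : IsArc V (D.vtx v) p) (hA : IsArc A (D.vtx x) p) (hVvw : V ⊆ D.arc v w)
    (hAxy : A ⊆ D.arc x y) : IsJordanCurve (D.arc v x ∪ (V ∪ A)) := by
  have hVA : V ∩ A = {p} := Subset.antisymm (fun z hz ↦ h.eq_of_mem (hVvw hz.1) (hAxy hz.2))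
    (singleton_subset_iff.2 ⟨hV.right_mem, hA.right_mem⟩)
  refine ⟨_, _, _, _, D.isArc_arc h.vx, hV.union hA.symm hVA, Subset.antisymm ?_ ?_, rfl⟩
  · rintro z ⟨hz, hzV | hzA⟩
    · exact .inl (eq_vtx_of_mem_arc h.vx h.vw h.wx.symm hz (hVvw hzV))
    · exact .inr (eq_vtx_of_mem_arc h.vx.symm h.xy h.vy (D.arc_symm v x ▸ hz) (hAxy hzA))
  · exact pair_subset ⟨(D.isArc_arc h.vx).left_mem, .inl hV.left_mem⟩
      ⟨(D.isArc_arc h.vx).right_mem, .inr hA.left_mem⟩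

theorem disjoint_arc_quad (h : D.IsCrossing v w x y p) :
    Disjoint (D.arc x y \ {D.vtx x, D.vtx y}) (D.quad v x w y) := by
  refine disjoint_left.2 fun z ⟨hz, hzxy⟩ hz' ↦ hzxy ?_
  have hz₁ : z ∈ D.arc y x := D.arc_symm x y ▸ hz
  obtain ((hz' | hz') | hz') | hz' := hz'
  · exact .inl (eq_vtx_of_mem_arc h.xy h.vx.symm h.vy.symm hz (D.arc_symm v x ▸ hz'))
  · exact .inl (eq_vtx_of_mem_arc h.xy h.wx.symm h.wy.symm hz hz')
  · exact .inr (eq_vtx_of_mem_arc h.xy.symm h.wy.symm h.wx.symm hz₁ (D.arc_symm w y ▸ hz'))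
  · exact .inr (eq_vtx_of_mem_arc h.xy.symm h.vy.symm h.vx.symm hz₁ hz')

theorem disjoint_diagonals_diff_quad (h : D.IsCrossing v w x y p) :
    Disjoint (D.arc v w \ {D.vtx v, D.vtx w} ∪ D.arc x y \ {D.vtx x, D.vtx y})
      (D.quad v x w y) :=
  disjoint_union_left.2 ⟨D.quad_comm v x w y ▸ h.swap.disjoint_arc_quad, h.disjoint_arc_quad⟩

theorem diagonals_diff_subset (h : D.IsCrossing v w x y p) :
    (D.arc v w ∪ D.arc x y) \ D.quad v x w y ⊆
      D.arc v w \ {D.vtx v, D.vtx w} ∪ D.arc x y \ {D.vtx x, D.vtx y} := by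
  have hvx := D.isArc_arc h.vx
  have hwy := D.isArc_arc h.wy
  rintro z ⟨hz | hz, hzQ⟩
  · refine .inl ⟨hz, ?_⟩
    rintro (rfl | rfl)
    exacts [hzQ (.inl (.inl (.inl hvx.left_mem))), hzQ (.inl (.inr hwy.left_mem))]
  · refine .inr ⟨hz, ?_⟩
    rintro (rfl | rfl)
    exacts [hzQ (.inl (.inl (.inl hvx.right_mem))), hzQ (.inl (.inr hwy.right_mem))]

theorem isPreconnected_diagonals_diff (h : D.IsCrossing v w x y p) :
    IsPreconnected (D.arc v w \ {D.vtx v, D.vtx w} ∪ D.arc x y \ {D.vtx x, D.vtx y}) :=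
  IsPreconnected.union p ⟨h.mem_left, not_or.2 ⟨h.ne_vtx v, h.ne_vtx w⟩⟩
    ⟨h.mem_right, not_or.2 ⟨h.ne_vtx x, h.ne_vtx y⟩⟩
    (D.isArc_arc h.vw).isPreconnected_diff (D.isArc_arc h.xy).isPreconnected_diff

end IsCrossing

end Arcs

section Sphere

variable {n : ℕ} {S : Type*} [TopologicalSpace S] [TopologicalSphere S] {D : GoodDrawing n S}
  {F : Set S} {u v w x y : Fin n} {p q b : S}

namespace IsCrossing

theorem not_joinedOff_tri {A B : Set S} {a : S} (h : D.IsCrossing v w x y p)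
    (hA : IsArc A (D.vtx x) p) (hB : IsArc B p (D.vtx y)) (hAB : A ∪ B = D.arc x y)
    (hABp : A ∩ B = {p}) (ha : a ∈ A) :
    ¬JoinedOff (D.tri v w x) a (D.vtx y) := by
  have hinter := h.tri_inter_arc
  have hJ := D.isJordanCurve_tri h.vw h.vx h.wx
  have hcross : CrossesAt (D.tri v w x) (D.arc x y) p := by
    rw [tri, union_assoc]
    exact h.crossesAt.union ((D.isArc_arc h.wx).isClosed.union (D.isArc_arc h.vx).isClosed)
      (not_or.2 ⟨h.swap_left.notMem_arc, h.notMem_arc⟩)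
  have hxB : D.vtx x ∉ B := fun hx ↦ h.ne_vtx x (hABp.subset ⟨hA.left_mem, hx⟩).symm
  intro hjoin
  have haJ := hjoin.left_notMem
  have hyp : D.vtx y ∈ B \ {p} := ⟨hB.right_mem, (h.ne_vtx y).symm⟩
  refine hJ.not_joinedOff_of_crossesAt hcross hA.isPreconnected_diff hB.isPreconnected_diff_left
    ?_ ?_ ?_ ?_ hyp hjoin <;> grind

theorem exists_mem_arc_not_joinedOff_tri (h : D.IsCrossing v w x y p) :
    ∃ a ∈ D.arc x y \ {D.vtx x, D.vtx y}, a ∉ D.tri v w x ∧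
      ¬JoinedOff (D.tri v w x) a (D.vtx y) ∧ JoinedOff (D.tri v w y) a (D.vtx x) := by
  obtain ⟨A, B, hA, hB, hAB, hABp⟩ := h.exists_split
  obtain ⟨a, haA, hax⟩ : (A \ {D.vtx x, p}).Nonempty :=
    closure_nonempty_iff.1 ⟨_, hA.subset_closure_diff hA.left_mem⟩
  have hxyA : D.vtx y ∉ A := fun hy ↦ h.ne_vtx y (hABp.subset ⟨hy, hB.right_mem⟩).symm
  have hinter := h.tri_inter_arc
  have hinter' := h.swap_right.tri_inter_arc
  rw [D.arc_symm y x] at hinter'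
  refine ⟨a, by grind, by grind, h.not_joinedOff_tri hA hB hAB hABp haA, A \ {p}, ?_,
    hA.isPreconnected_diff_right, by grind, hA.left_mem, (h.ne_vtx x).symm⟩
  grind

theorem joinedOff_tri (h : D.IsCrossing v w x y p) (hF : D.FaceConvex F) (hb : b ∈ F) :
    JoinedOff (D.tri v w x) (D.vtx y) b := by
  by_contra hnot
  obtain ⟨a, ⟨ha, -⟩, haT, haj, -⟩ := h.exists_mem_arc_not_joinedOff_tri
  have hyT : D.vtx y ∉ D.tri v w x := D.vtx_notMem_tri h.vy.symm h.wy.symm h.xy.symm h.vw h.vx h.wx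
  have hbT : b ∉ D.tri v w x := fun hbT ↦
    hF.1.subset_compl hb (tri_subset_image h.vw h.vx h.wx hbT)
  let Δ : Set S := connectedComponentIn (D.tri v w x)ᶜ (D.vtx y) ∪ D.tri v w x
  have hbΔ : b ∉ Δ := not_or.2 ⟨mt joinedOff_iff_mem_connectedComponentIn.2 hnot, hbT⟩
  have hΔ : D.ConvexDisc Δ :=
    hF.2 v w x h.vw h.vx h.wx Δ ⟨D.vtx y, hyT, rfl⟩ fun hFΔ ↦ hbΔ (hFΔ hb)
  have hxΔ : D.vtx x ∈ Δ := .inr (.inr (D.isArc_arc h.vx).right_mem)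
  obtain haΔ | haΔ := hΔ x y h.xy hxΔ (.inl (mem_connectedComponentIn hyT)) ha
  · exact haj (joinedOff_iff_mem_connectedComponentIn.2 haΔ).symm
  · exact haT haΔ

theorem joinedOff_corner {V A B : Set S} (h : D.IsCrossing v w x y p) (hA : IsArc A (D.vtx x) p)
    (hB : IsArc B p (D.vtx y)) (hAB : A ∪ B = D.arc x y) (hABp : A ∩ B = {p})
    (hVvw : V ⊆ D.arc v w) (hwV : D.vtx w ∉ V) :
    JoinedOff (D.arc v x ∪ (V ∪ A)) (D.vtx w) (D.vtx y) := by
  have hyT : D.vtx y ∉ D.tri v w x := D.vtx_notMem_tri h.vy.symm h.wy.symm h.xy.symm h.vw h.vx h.wx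
  set E : Set S := connectedComponentIn (D.tri v w x)ᶜ (D.vtx y)
  have hwE : D.vtx w ∈ closure E := frontier_subset_closure <|
    ((D.isJordanCurve_tri h.vw h.vx h.wx).frontier_connectedComponentIn_compl hyT).superset
      (.inl (.inl (D.isArc_arc h.vw).right_mem))
  have hET : E ⊆ (D.tri v w x)ᶜ := connectedComponentIn_subset _ _
  have hEA : Disjoint E A := disjoint_left.2 fun a haE haA ↦
    h.not_joinedOff_tri hA hB hAB hABp haA (joinedOff_iff_mem_connectedComponentIn.2 haE).symm
  have hwvx : D.vtx w ∉ D.arc v x := D.vtx_not_mem v x w h.vx h.vw.symm h.wx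
  have hwA : D.vtx w ∉ A := fun hw ↦
    D.vtx_not_mem x y w h.xy h.wx h.wy (hAB.subset (.inl hw))
  refine ⟨insert (D.vtx w) E, insert_subset ?_ fun z hz ↦ ?_,
    isPreconnected_connectedComponentIn.subset_closure (subset_insert _ _)
      (insert_subset hwE subset_closure), mem_insert _ _, .inr (mem_connectedComponentIn hyT)⟩
  · exact not_or.2 ⟨hwvx, not_or.2 ⟨hwV, hwA⟩⟩
  · rintro (hz' | hz' | hz')
    exacts [hET hz (.inr hz'), hET hz (.inl (.inl (hVvw hz'))), disjoint_left.1 hEA hz hz']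

/-- If `q` were on both arcs, `D[wy]` would cross at `q` the closed curve formed by `D[vx]` and the
halves of `D[vw]` and `D[xy]` from `v` and `x` to `p`, so this curve would separate `w` from `y`. -/
theorem disjoint_arc (h : D.IsCrossing v w x y p) : Disjoint (D.arc v x) (D.arc w y) := by
  refine disjoint_left.2 fun q hq hq' ↦ ?_
  obtain ⟨A, B, hA, hB, hAB, hABp⟩ := h.exists_split
  obtain ⟨V, W, hV, hW, hVW, hVWp⟩ := h.swap.exists_split
  have hVvw : V ⊆ D.arc v w := hVW ▸ subset_union_left
  have hAxy : A ⊆ D.arc x y := hAB ▸ subset_union_left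
  have hVwy : Disjoint V (D.arc w y) :=
    h.swap.disjoint_arc_of_split hW hVW hVWp h.vy.symm h.wy.symm
  have hAwy : Disjoint A (D.arc w y) :=
    D.arc_symm y w ▸ h.disjoint_arc_of_split hB hAB hABp h.wx h.wy
  have hJ : IsJordanCurve (D.arc v x ∪ (V ∪ A)) := h.isJordanCurve_corner hV hA hVvw hAxy
  have hwy := D.isArc_arc h.wy
  have hjoin : JoinedOff (D.arc v x ∪ (V ∪ A)) (D.vtx w) (D.vtx y) :=
    h.joinedOff_corner hA hB hAB hABp hVvw (disjoint_right.1 hVwy hwy.left_mem)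
  obtain ⟨hsub, hcross⟩ := D.indep_arcs v x w y h.vx h.wy h.vw h.vy h.wx.symm h.xy
  have hcross' : CrossesAt (D.arc v x ∪ (V ∪ A)) (D.arc w y) q :=
    (hcross q ⟨hq, hq'⟩).1.union (hV.isClosed.union hA.isClosed)
      (not_or.2 ⟨disjoint_right.1 hVwy hq', disjoint_right.1 hAwy hq'⟩)
  have hwq : D.vtx w ≠ q := fun hwq ↦ D.vtx_not_mem v x w h.vx h.vw.symm h.wx (hwq ▸ hq)
  have hyq : D.vtx y ≠ q := fun hyq ↦ D.vtx_not_mem v x y h.vx h.vy.symm h.xy.symm (hyq ▸ hq)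
  obtain ⟨C, C', hC, hC', hCC, -⟩ := hwy.exists_split hq' hwq.symm hyq.symm
  have hmeet : ∀ z ∈ D.arc w y, z ∈ D.arc v x ∪ (V ∪ A) → z = q := by
    rintro z hz (hz' | hz' | hz')
    exacts [hsub ⟨hz', hz⟩ ⟨hq, hq'⟩, (disjoint_left.1 hVwy hz' hz).elim,
      (disjoint_left.1 hAwy hz' hz).elim]
  refine hJ.not_joinedOff_of_crossesAt hcross' hC.isPreconnected_diff_right
    hC'.isPreconnected_diff_left ?_ ?_ ?_ ⟨hC.left_mem, hwq⟩ ⟨hC'.right_mem, hyq⟩ hjoin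
  · exact fun z hz hzJ ↦ hz.2 (hmeet z (hCC.subset (.inl hz.1)) hzJ)
  · exact fun z hz hzJ ↦ hz.2 (hmeet z (hCC.subset (.inr hz.1)) hzJ)
  · grind

theorem isJordanCurve_quad (h : D.IsCrossing v w x y p) : IsJordanCurve (D.quad v x w y) := by
  refine ⟨_, _, _, _, D.isArc_path h.vx h.vw h.wx.symm, D.isArc_path h.vy h.vw h.wy.symm, ?_, ?_⟩
  · rw [D.arc_symm x w, D.arc_symm y w, union_inter_distrib_right, inter_union_distrib_left,
      inter_union_distrib_left, D.adj_arcs v x y h.vx h.vy h.xy, D.adj_arcs w x y h.wx h.wy h.xy,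
      h.disjoint_arc.inter_eq, h.swap_left.disjoint_arc.inter_eq, union_empty, empty_union]
    rfl
  · rw [quad, D.arc_symm w y, D.arc_symm y v, union_assoc, union_comm (D.arc y w)]

theorem quad_inter_tri (h : D.IsCrossing v w x y p) :
    D.quad v x w y ∩ D.tri v w x = D.arc v x ∪ D.arc x w := by
  have hvx := D.isArc_arc h.vx
  have hxw := D.isArc_arc h.wx.symm
  refine Subset.antisymm ?_ (subset_inter (subset_union_left.trans subset_union_left) ?_)
  · rintro z ⟨(hz | hz) | hz, hzT⟩
    · exact hz
    · obtain rfl | hwx : z = D.vtx w ∨ z ∈ D.arc w x := by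
        obtain (hz' | hz') | hz' := hzT
        · exact .inl (eq_vtx_of_mem_arc h.wy h.vw.symm h.vy.symm hz (D.arc_symm v w ▸ hz'))
        · exact .inr hz'
        · exact (disjoint_left.1 h.disjoint_arc hz' hz).elim
      exacts [.inr hxw.right_mem, .inr (D.arc_symm w x ▸ hwx)]
    · rw [D.arc_symm y v] at hz
      obtain rfl | hvx' : z = D.vtx v ∨ z ∈ D.arc v x := by
        obtain (hz' | hz') | hz' := hzT
        · exact .inl (eq_vtx_of_mem_arc h.vy h.vw h.wy.symm hz hz')
        · exact (disjoint_left.1 h.swap_left.disjoint_arc hz' hz).elim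
        · exact .inr hz'
      exacts [.inl hvx.left_mem, .inl hvx']
  · rw [tri, D.arc_symm x w, union_comm]
    exact union_subset_union subset_union_right Subset.rfl

theorem exists_mem_arc_not_joinedOff_quad (h : D.IsCrossing v w x y p) (hF : D.FaceConvex F)
    (hb : b ∈ F) : ∃ a ∈ D.arc x y \ {D.vtx x, D.vtx y}, ¬JoinedOff (D.quad v x w y) a b := by
  obtain ⟨a, ⟨ha, hane⟩, -, hsep, hjoin⟩ := h.swap_right.exists_mem_arc_not_joinedOff_tri
  refine ⟨a, ⟨D.arc_symm x y ▸ ha, pair_comm (D.vtx x) _ ▸ hane⟩, fun hab ↦ hsep ?_⟩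
  have hab' : JoinedOff (D.tri v w x) a b := hjoin.trans (h.joinedOff_tri hF hb)
  have hconn : IsPreconnected (D.quad v x w y ∩ D.tri v w x) :=
    h.quad_inter_tri ▸ (D.isArc_path h.vx h.vw h.wx.symm).isPreconnected
  have habu := hab.union h.isJordanCurve_quad.isClosed
    (D.isJordanCurve_tri h.vw h.vx h.wx).isClosed hconn hab'
  refine (habu.mono ?_).trans (h.swap_right.joinedOff_tri hF hb).symm
  rw [quad, tri, tri, D.arc_symm y v]
  grind

theorem disjoint_connectedComponentIn_image (h : D.IsCrossing v w x y p)
    (hF : D.FaceConvex F) (hb : b ∈ F) :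
    Disjoint (connectedComponentIn (D.quad v x w y)ᶜ b) (D.image {v, w, x, y}) := by
  rw [D.image_eq_quad_union h.vw h.vx h.vy h.wx h.wy h.xy]
  refine disjoint_left.2 fun z hz hzimage ↦ ?_
  have hzQ : z ∉ D.quad v x w y := connectedComponentIn_subset _ _ hz
  have hz' := h.diagonals_diff_subset ⟨hzimage.resolve_left hzQ, hzQ⟩
  obtain ⟨a, ha, hab⟩ := h.exists_mem_arc_not_joinedOff_quad hF hb
  exact hab (JoinedOff.trans ⟨_, subset_compl_iff_disjoint_right.2 h.disjoint_diagonals_diff_quad,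
    h.isPreconnected_diagonals_diff, .inr ha, hz'⟩
    (joinedOff_iff_mem_connectedComponentIn.2 hz).symm)

end IsCrossing

end Sphere

end GoodDrawing

theorem outer_face_in_quadrilateral_general {S : Type*} [TopologicalSpace S] [TopologicalSphere S]
    (n : ℕ) (D : GoodDrawing n S) (F : Set S) (hFC : D.FaceConvex F) (v w x y : Fin n)
    (hvw : v ≠ w) (hvx : v ≠ x) (hvy : v ≠ y) (hwx : w ≠ x) (hwy : w ≠ y) (hxy : x ≠ y)
    (hcross : D.Crosses v w x y) :
    ∃ G : Set S, IsFaceOf (D.image {v, w, x, y}) G ∧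
      frontier G = D.arc v x ∪ D.arc x w ∪ D.arc w y ∪ D.arc y v ∧ F ⊆ G := by
  obtain ⟨p, ⟨hpvw, hpxy⟩, hp⟩ := hcross
  have h : D.IsCrossing v w x y p := ⟨hvw, hvx, hvy, hwx, hwy, hxy, hpvw, hpxy, hp⟩
  obtain ⟨b, hb, hFb⟩ := hFC.1
  have hbF : b ∈ F := hFb ▸ mem_connectedComponentIn hb
  have hbimage : b ∉ D.image {v, w, x, y} := fun hb' ↦ hb (D.image_mono (subset_univ _) hb')
  have hQimage : D.quad v x w y ⊆ D.image {v, w, x, y} :=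
    (D.image_eq_quad_union hvw hvx hvy hwx hwy hxy).superset.trans' subset_union_left
  have hbQ : b ∉ D.quad v x w y := fun hb' ↦ hbimage (hQimage hb')
  refine ⟨connectedComponentIn (D.image {v, w, x, y})ᶜ b, ⟨b, hbimage, rfl⟩, ?_, ?_⟩
  · rw [← connectedComponentIn_compl_eq_of_disjoint hQimage hbQ
      (h.disjoint_connectedComponentIn_image hFC hbF)]
    exact h.isJordanCurve_quad.frontier_connectedComponentIn_compl hbQ
  · rw [hFb]
    exact connectedComponentIn_mono b (compl_subset_compl.2 (D.image_mono (subset_univ _)))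

/-- In a face-convex drawing with outer face `F`, if the `K_4` on `v, w, x, y` is drawn
with `D[vw]` crossing `D[xy]`, then `F` lies in the face of the `K_4` bounded by the
4-cycle `(v, x, w, y, v)`. -/
theorem outer_face_in_quadrilateral (n : ℕ) (D : GoodDrawing n SpherePt)
    (F : Set SpherePt) (hFC : D.FaceConvex F) (v w x y : Fin n)
    (hvw : v ≠ w) (hvx : v ≠ x) (hvy : v ≠ y) (hwx : w ≠ x) (hwy : w ≠ y) (hxy : x ≠ y)
    (hcross : D.Crosses v w x y) :
    ∃ G : Set SpherePt, IsFaceOf (D.image {v, w, x, y}) G ∧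
      frontier G = D.arc v x ∪ D.arc x w ∪ D.arc w y ∪ D.arc y v ∧ F ⊆ G :=
  outer_face_in_quadrilateral_general n D F hFC v w x y hvw hvx hvy hwx hwy hxy hcross

end
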